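/- arXiv:2103.11418 — 2 statements merged into one kernel-verified Lean document; each statement's English description precedes it below -/
import Mathlib

section
/- Let $d \ge 2$ and let $E$ and $F$ be compact sets in $\mathbb{R}^d$ with $\dim_H(E) > \frac{d+1}{2}$ and $\dim_H(F) > \frac{d+1}{2}$. Then the set $P(E-F) := \{P(x-y) : x \in E, y \in F\}$ has non-empty interior, where $P(x) = x_1^2 + \cdots + x_{d-1}^2 + x_d$ for $x = (x_1, \ldots, x_d) \in \mathbb{R}^d$. -/
open ENNReal

/-- The parabolic polynomial `P(x) = x₁² + ⋯ + x_{d-1}² + x_d` on `ℝᵈ`. -/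
def parab (d : ℕ) (x : EuclideanSpace ℝ (Fin d)) : ℝ :=
  ∑ i : Fin d, if (i : ℕ) < d - 1 then x i ^ 2 else x i

open MeasureTheory Complex Filter Topology in
theorem gauss_swap {V Y : Type*} [NormedAddCommGroup V] [InnerProductSpace ℝ V]
    [FiniteDimensional ℝ V] [MeasurableSpace V] [BorelSpace V] [MeasurableSpace Y]
    (κ : Measure Y) [IsFiniteMeasure κ] (φ : Y → V) (hφ : Measurable φ) (g : Y → ℂ)
    (hg : Measurable g) (hg1 : ∀ y, ‖g y‖ ≤ 1) (b : ℂ) (hb : 0 < b.re) :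
    ∫ ξ : V, cexp (-b * ‖ξ‖ ^ 2) * ∫ y, g y * cexp (I * inner ℝ (φ y) ξ) ∂κ =
      (Real.pi / b) ^ (Module.finrank ℝ V / 2 : ℂ) *
        ∫ y, g y * cexp (-‖φ y‖ ^ 2 / (4 * b)) ∂κ := by
  have hinteg : Integrable (Function.uncurry fun (ξ : V) (y : Y) =>
      cexp (-b * ‖ξ‖ ^ 2) * (g y * cexp (I * inner ℝ (φ y) ξ))) (volume.prod κ) := by
    have h1 : Integrable (fun ξ : V => cexp (-b * ‖ξ‖ ^ 2)) := by
      simpa using GaussianFourier.integrable_cexp_neg_mul_sq_norm_add hb 0 (0 : V)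
    have h2 := h1.mul_prod (integrable_const (1 : ℂ) (μ := κ))
    refine h2.mono ?_ ?_
    · apply Measurable.aestronglyMeasurable
      fun_prop
    · refine Eventually.of_forall fun z => ?_
      simp only [Function.uncurry, norm_mul, mul_one]
      have : ‖cexp (I * inner ℝ (φ z.2) z.1)‖ = 1 := by
        rw [mul_comm]; exact norm_exp_ofReal_mul_I _
      rw [this, mul_one]
      exact mul_le_of_le_one_right (norm_nonneg _) (hg1 _)
  calc _ = ∫ ξ : V, ∫ y, cexp (-b * ‖ξ‖ ^ 2) * (g y * cexp (I * inner ℝ (φ y) ξ)) ∂κ := by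
        simp_rw [integral_const_mul]
    _ = ∫ y, (∫ ξ : V, cexp (-b * ‖ξ‖ ^ 2) * (g y * cexp (I * inner ℝ (φ y) ξ))) ∂κ :=
        integral_integral_swap hinteg
    _ = ∫ y, (Real.pi / b) ^ (Module.finrank ℝ V / 2 : ℂ) *
          (g y * cexp (-‖φ y‖ ^ 2 / (4 * b))) ∂κ := by
        congr 1 with y
        have := GaussianFourier.integral_cexp_neg_mul_sq_norm_add hb I (φ y)
        rw [show ∀ x : ℂ, (I ^ 2 * x) = -x by intro x; simp] at this
        rw [mul_left_comm, ← this, ← integral_const_mul]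
        congr 1 with ξ
        rw [Complex.exp_add]; ring
    _ = _ := by rw [integral_const_mul]

open MeasureTheory Complex Filter Topology in
theorem interior_of_integrable_charFun (κ : Measure ℝ) [IsFiniteMeasure κ] (hne : κ ≠ 0)
    (K : Set ℝ) (hKc : IsClosed K) (hK : κ Kᶜ = 0) (hinteg : Integrable (charFun κ)) :
    (interior K).Nonempty := by
  by_contra hemp
  rw [Set.not_nonempty_iff_eq_empty, interior_eq_empty_iff_dense_compl] at hemp
  have key : ∀ v : ℝ, 2 * Real.pi * v ∈ Kᶜ → FourierTransform.fourier (charFun κ) v = 0 := by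
    intro v hv
    obtain ⟨δ, hδ, hball⟩ := Metric.isOpen_iff.1 hKc.isOpen_compl _ hv
    rw [Real.fourier_eq']
    have hinteg' : Integrable fun τ : ℝ =>
        cexp (((-2 * Real.pi * inner ℝ τ v : ℝ) : ℂ) * I) • charFun κ τ := by
      simp only [smul_eq_mul]
      refine hinteg.bdd_mul (c := 1) ?_ ?_
      · apply Continuous.aestronglyMeasurable
        fun_prop
      · exact Eventually.of_forall fun τ => (norm_exp_ofReal_mul_I _).le
    have ht := Real.tendsto_integral_cexp_sq_smul hinteg'
    refine tendsto_nhds_unique ht ?_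
    have hb : ∀ c : ℝ, 0 < c → ‖∫ τ : ℝ, cexp (-((c⁻¹ : ℝ) : ℂ) * ‖τ‖ ^ 2) •
        (cexp (((-2 * Real.pi * inner ℝ τ v : ℝ) : ℂ) * I) • charFun κ τ)‖ ≤
        ((Real.pi) ^ (1 / 2 : ℝ) * κ.real Set.univ) * (c ^ (1 / 2 : ℝ) * Real.exp (-(δ ^ 2 / 4) * c)) := by
      intro c hc
      have h1 := gauss_swap κ (fun y : ℝ => y - 2 * Real.pi * v) (by fun_prop) (fun _ => 1)
        (by fun_prop) (by simp) ((c⁻¹ : ℝ) : ℂ) (by simpa using hc)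
      have h2 : ∫ τ : ℝ, cexp (-((c⁻¹ : ℝ) : ℂ) * ‖τ‖ ^ 2) •
        (cexp (((-2 * Real.pi * inner ℝ τ v : ℝ) : ℂ) * I) • charFun κ τ) =
        ∫ ξ : ℝ, cexp (-((c⁻¹ : ℝ) : ℂ) * ‖ξ‖ ^ 2) *
          ∫ y, 1 * cexp (I * inner ℝ (y - 2 * Real.pi * v) ξ) ∂κ := by
        congr 1 with τ
        rw [smul_eq_mul, smul_eq_mul, charFun_apply_real, ← integral_const_mul]
        congr 2 with y
        rw [← Complex.exp_add, one_mul]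
        congr 1
        simp
        ring
      rw [h2, h1, norm_mul]
      have h3 : ‖((Real.pi : ℂ) / ((c⁻¹ : ℝ) : ℂ)) ^ (Module.finrank ℝ ℝ / 2 : ℂ)‖ =
          Real.pi ^ (1 / 2 : ℝ) * c ^ (1 / 2 : ℝ) := by
        rw [← Real.mul_rpow Real.pi_pos.le hc.le]
        have : ((Real.pi : ℂ) / ((c⁻¹ : ℝ) : ℂ)) = ((Real.pi * c : ℝ) : ℂ) := by
          push_cast; simp
        rw [this, Complex.norm_cpow_eq_rpow_re_of_pos (by positivity)]
        simp
      have h4 : ‖∫ y : ℝ, 1 * cexp (-‖y - 2 * Real.pi * v‖ ^ 2 / (4 * ((c⁻¹ : ℝ) : ℂ))) ∂κ‖ ≤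
          Real.exp (-(δ ^ 2 / 4) * c) * κ.real Set.univ := by
        apply norm_integral_le_of_norm_le_const
        have : ∀ᵐ y ∂κ, y ∈ K := by
          rw [ae_iff]; exact hK
        filter_upwards [this] with y hy
        have hd : δ ≤ ‖y - 2 * Real.pi * v‖ := by
          by_contra! hlt
          exact hball (by rwa [Metric.mem_ball, dist_eq_norm]) hy
        rw [one_mul]
        have : (-‖y - 2 * Real.pi * v‖ ^ 2 / (4 * ((c⁻¹ : ℝ) : ℂ))) =
          ((-(‖y - 2 * Real.pi * v‖ ^ 2 / 4) * c : ℝ) : ℂ) := by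
          push_cast; field_simp
        rw [this, Complex.norm_exp_ofReal]
        gcongr
      rw [h3]
      calc _ ≤ Real.pi ^ (1 / 2 : ℝ) * c ^ (1 / 2 : ℝ) * (Real.exp (-(δ ^ 2 / 4) * c) * κ.real Set.univ) := by
            gcongr
        _ = _ := by ring
    have hz : Tendsto (fun c : ℝ => ((Real.pi) ^ (1 / 2 : ℝ) * κ.real Set.univ) *
        (c ^ (1 / 2 : ℝ) * Real.exp (-(δ ^ 2 / 4) * c))) atTop (𝓝 0) := by
      simpa using (tendsto_rpow_mul_exp_neg_mul_atTop_nhds_zero (1/2) (δ ^ 2 / 4) (by positivity)).const_mul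
        ((Real.pi) ^ (1 / 2 : ℝ) * κ.real Set.univ)
    refine squeeze_zero_norm' ?_ hz
    filter_upwards [eventually_gt_atTop 0] with c hc using hb c hc
  have hcont : Continuous (FourierTransform.fourier (charFun κ)) :=
    VectorFourier.fourierIntegral_continuous Real.continuous_fourierChar
      (by exact continuous_inner) hinteg
  have hdense : Dense ((fun v : ℝ => 2 * Real.pi * v) ⁻¹' Kᶜ) :=
    hemp.preimage ((Homeomorph.mulLeft₀ (2 * Real.pi) (by positivity)).isOpenMap)
  have hzero : FourierTransform.fourier (charFun κ) = fun _ => 0 :=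
    hcont.ext_on hdense continuous_const fun v hv => key v hv
  have hinv := (continuous_charFun (μ := κ)).fourierInv_fourier_eq hinteg
    (by rw [hzero]; exact integrable_zero _ _ _)
  have h0 := congrFun hinv 0
  rw [hzero, charFun_zero, Real.fourierInv_eq'] at h0
  simp at h0
  have : κ.real Set.univ = 0 := by exact_mod_cast h0.symm
  rw [measureReal_eq_zero_iff, Measure.measure_univ_eq_zero] at this
  exact hne this

open MeasureTheory Complex Filter Topology in
/-- Fourier transform of a measure on `W × ℝ`. -/
noncomputable def ftM {W : Type*} [NormedAddCommGroup W] [InnerProductSpace ℝ W]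
    [MeasurableSpace W] (m : Measure (W × ℝ)) (ζ : ℝ × W) : ℂ :=
  ∫ z, cexp (I * ((inner ℝ z.1 ζ.2 + ζ.1 * z.2 : ℝ) : ℂ)) ∂m

section
open MeasureTheory Complex Filter Topology

set_option linter.unusedSectionVars false

variable {W : Type*} [NormedAddCommGroup W] [InnerProductSpace ℝ W]
    [FiniteDimensional ℝ W] [MeasurableSpace W] [BorelSpace W]

theorem ftM_meas (m : Measure (W × ℝ)) [IsFiniteMeasure m] : Measurable (ftM m) := by
  have : StronglyMeasurable (fun ζ : ℝ × W => ∫ z, cexp (I * ((inner ℝ z.1 ζ.2 + ζ.1 * z.2 : ℝ) : ℂ)) ∂m) := by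
    apply StronglyMeasurable.integral_prod_right
      (f := fun (ζ : ℝ × W) (z : W × ℝ) => cexp (I * ((inner ℝ z.1 ζ.2 + ζ.1 * z.2 : ℝ) : ℂ)))
    apply Measurable.stronglyMeasurable
    fun_prop
  exact this.measurable

theorem ftM_norm_le (m : Measure (W × ℝ)) [IsFiniteMeasure m] (ζ : ℝ × W) :
    ‖ftM m ζ‖ ≤ m.real Set.univ := by
  have := norm_integral_le_of_norm_le_const (μ := m) (C := 1)
    (f := fun z => cexp (I * ((inner ℝ z.1 ζ.2 + ζ.1 * z.2 : ℝ) : ℂ)))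
    (Eventually.of_forall fun z => by rw [mul_comm]; exact (norm_exp_ofReal_mul_I _).le)
  simpa [ftM] using this

theorem ftM_mul_conj (m m' : Measure (W × ℝ)) [IsFiniteMeasure m] [IsFiniteMeasure m']
    (τ : ℝ) (ξ : W) :
    ∫ y : (W × ℝ) × (W × ℝ), cexp (I * ((τ * (y.1.2 - y.2.2) : ℝ) : ℂ)) *
      cexp (I * inner ℝ (y.1.1 - y.2.1) ξ) ∂(m.prod m') =
    ftM m (τ, ξ) * (starRingEnd ℂ) (ftM m' (τ, ξ)) := by
  unfold ftM
  rw [← integral_conj, ← integral_prod_mul]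
  congr 1 with y
  rw [← Complex.exp_conj, ← Complex.exp_add, ← Complex.exp_add]
  congr 1
  simp [inner_sub_left]
  ring

theorem energy_bound (m : Measure (W × ℝ)) [IsFiniteMeasure m] (t D : ℝ) (ht : 0 < t)
    (hm : ∀ z : W × ℝ, ∫ w, Real.exp (-(‖z.1 - w.1‖ ^ 2 + (z.2 - w.2) ^ 2) / (4 * t)) ∂m ≤ D) :
    Integrable (fun ζ : ℝ × W => Real.exp (-t * (‖ζ.2‖ ^ 2 + ζ.1 ^ 2)) * ‖ftM m ζ‖ ^ 2)
      (volume.prod volume) ∧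
    ∫ ζ : ℝ × W, Real.exp (-t * (‖ζ.2‖ ^ 2 + ζ.1 ^ 2)) * ‖ftM m ζ‖ ^ 2 ∂(volume.prod volume)
      ≤ (Real.pi / t) ^ ((Module.finrank ℝ W + 1 : ℝ) / 2) * (D * m.real Set.univ) := by
  have hmeas := ftM_meas m
  have hre : 0 < (t : ℂ).re := by simpa using ht
  have hg1 : Integrable (fun τ : ℝ => Real.exp (-t * τ ^ 2)) := by
    simpa using integrable_exp_neg_mul_sq ht
  have hg2 : Integrable (fun ξ : W => Real.exp (-t * ‖ξ‖ ^ 2)) := by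
    have := (GaussianFourier.integrable_cexp_neg_mul_sq_norm_add hre 0 (0 : W)).norm
    refine this.congr (Eventually.of_forall fun ξ => ?_)
    simp only [zero_mul, add_zero]
    rw [← Complex.norm_exp_ofReal]; push_cast; rfl
  have hinteg : Integrable (fun ζ : ℝ × W => Real.exp (-t * (‖ζ.2‖ ^ 2 + ζ.1 ^ 2)) * ‖ftM m ζ‖ ^ 2)
      (volume.prod volume) := by
    have h := (hg1.mul_prod hg2).mul_const ((m.real Set.univ) ^ 2)
    refine h.mono (Measurable.aestronglyMeasurable (by fun_prop)) (Eventually.of_forall fun ζ => ?_)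
    rw [Real.norm_of_nonneg (by positivity), Real.norm_of_nonneg (by positivity), ← Real.exp_add]
    have := ftM_norm_le m ζ
    rw [show -t * ζ.1 ^ 2 + -t * ‖ζ.2‖ ^ 2 = -t * (‖ζ.2‖ ^ 2 + ζ.1 ^ 2) by ring]
    gcongr
  refine ⟨hinteg, ?_⟩
  set κ := m.prod m with hκ
  have hmain : ((∫ ζ : ℝ × W, Real.exp (-t * (‖ζ.2‖ ^ 2 + ζ.1 ^ 2)) * ‖ftM m ζ‖ ^ 2
      ∂(volume.prod volume) : ℝ) : ℂ) =
      (Real.pi / t : ℂ) ^ (Module.finrank ℝ W / 2 : ℂ) * ((Real.pi / t : ℂ) ^ (Module.finrank ℝ ℝ / 2 : ℂ) *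
      ∫ y : (W × ℝ) × (W × ℝ), cexp (-‖y.1.1 - y.2.1‖ ^ 2 / (4 * t)) *
        cexp (-‖y.1.2 - y.2.2‖ ^ 2 / (4 * t)) ∂κ) := by
    rw [integral_prod _ hinteg]
    rw [← gauss_swap κ (fun y => y.1.2 - y.2.2) (by fun_prop)
      (fun y => cexp (-‖y.1.1 - y.2.1‖ ^ 2 / (4 * t))) (by fun_prop) ?_ t hre, ← integral_const_mul,
      ← integral_complex_ofReal]
    · congr 1 with τ
      have := gauss_swap κ (fun y => y.1.1 - y.2.1) (by fun_prop)
        (fun y => cexp (I * ((τ * (y.1.2 - y.2.2) : ℝ) : ℂ))) (by fun_prop)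
        (fun y => by rw [mul_comm]; exact (norm_exp_ofReal_mul_I _).le) t hre
      rw [mul_left_comm]
      have e : ∀ y : (W × ℝ) × (W × ℝ), (inner ℝ (y.1.2 - y.2.2) τ : ℝ) = τ * (y.1.2 - y.2.2) := by
        intro y; simp
      simp_rw [e]
      rw [show (∫ y : (W × ℝ) × (W × ℝ), cexp (-‖y.1.1 - y.2.1‖ ^ 2 / (4 * t)) *
        cexp (I * ((τ * (y.1.2 - y.2.2) : ℝ) : ℂ)) ∂κ) =
        (∫ y : (W × ℝ) × (W × ℝ), cexp (I * ((τ * (y.1.2 - y.2.2) : ℝ) : ℂ)) *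
          cexp (-‖y.1.1 - y.2.1‖ ^ 2 / (4 * t)) ∂κ) by simp_rw [mul_comm], ← this,
          ← integral_const_mul, ← integral_complex_ofReal]
      congr 1 with ξ
      rw [ftM_mul_conj, Complex.mul_conj, Complex.normSq_eq_norm_sq, ← mul_assoc, ← Complex.exp_add]
      push_cast
      congr 2
      simp
      rw [← Complex.ofReal_pow |τ|, sq_abs]
      push_cast
      ring
    · intro y
      rw [show (-‖y.1.1 - y.2.1‖ ^ 2 / (4 * t) : ℂ) = ((-‖y.1.1 - y.2.1‖ ^ 2 / (4 * t) : ℝ) : ℂ) by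
        push_cast; rfl, Complex.norm_exp_ofReal]
      apply Real.exp_le_one_iff.2
      apply div_nonpos_of_nonpos_of_nonneg <;> simp [ht.le]
  have hD : ∫ y : (W × ℝ) × (W × ℝ),
      Real.exp (-(‖y.1.1 - y.2.1‖ ^ 2 + (y.1.2 - y.2.2) ^ 2) / (4 * t)) ∂κ ≤ D * m.real Set.univ := by
    have hi : Integrable (fun y : (W × ℝ) × (W × ℝ) =>
      Real.exp (-(‖y.1.1 - y.2.1‖ ^ 2 + (y.1.2 - y.2.2) ^ 2) / (4 * t))) κ := by
      refine (integrable_const (1 : ℝ)).mono (Measurable.aestronglyMeasurable (by fun_prop))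
        (Eventually.of_forall fun y => ?_)
      rw [Real.norm_of_nonneg (by positivity), norm_one, Real.exp_le_one_iff]
      apply div_nonpos_of_nonpos_of_nonneg
      · have : 0 ≤ ‖y.1.1 - y.2.1‖ ^ 2 + (y.1.2 - y.2.2) ^ 2 := by positivity
        linarith
      · positivity
    rw [integral_prod _ hi]
    calc _ ≤ ∫ z : W × ℝ, D ∂m := by
          apply integral_mono hi.integral_prod_left (integrable_const _)
          intro z; exact hm z
      _ = _ := by simp [mul_comm]
  have hn : ∀ r : ℝ, ‖(Real.pi / t : ℂ) ^ (r / 2 : ℂ)‖ = (Real.pi / t) ^ (r / 2) := by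
    intro r
    rw [← Complex.ofReal_div, Complex.norm_cpow_eq_rpow_re_of_pos (by positivity)]
    congr 1
    rw [show (r / 2 : ℂ) = ((r / 2 : ℝ) : ℂ) by push_cast; rfl, Complex.ofReal_re]
  calc _ ≤ ‖((∫ ζ : ℝ × W, Real.exp (-t * (‖ζ.2‖ ^ 2 + ζ.1 ^ 2)) * ‖ftM m ζ‖ ^ 2
      ∂(volume.prod volume) : ℝ) : ℂ)‖ := by rw [Complex.norm_real]; exact le_abs_self _
    _ = (Real.pi / t) ^ ((Module.finrank ℝ W + 1 : ℝ) / 2) *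
        ‖∫ y : (W × ℝ) × (W × ℝ), cexp (-‖y.1.1 - y.2.1‖ ^ 2 / (4 * t)) *
        cexp (-‖y.1.2 - y.2.2‖ ^ 2 / (4 * t)) ∂κ‖ := by
        rw [hmain, norm_mul, norm_mul, ← mul_assoc]
        have h1 := hn (Module.finrank ℝ W)
        have h2 := hn (Module.finrank ℝ ℝ)
        rw [Complex.ofReal_natCast] at h1 h2
        rw [h1, h2, ← Real.rpow_add (by positivity)]
        congr 2
        simp
        ring
    _ ≤ _ := by
        gcongr
        refine le_trans (norm_integral_le_integral_norm _) (le_trans (le_of_eq ?_) hD)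
        congr 1 with y
        rw [← Complex.exp_add, ← Complex.norm_exp_ofReal]
        congr 2
        push_cast
        rw [← Complex.ofReal_pow ‖y.1.2 - y.2.2‖, Real.norm_eq_abs, sq_abs]
        push_cast
        ring

/-- The weight appearing in the estimate of the characteristic function. -/
noncomputable def wgt (n : ℝ) (ζ : ℝ × W) : ℝ :=
  (Real.sqrt (1 + ζ.1 ^ 2)) ^ (-n / 2) * Real.exp (-‖ζ.2‖ ^ 2 / (4 * (1 + ζ.1 ^ 2)))

theorem wgt_le (n : ℝ) (hn : 0 ≤ n) (ζ : ℝ × W) : ∃ k : ℕ, wgt n ζ ≤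
    Real.exp (1 / 4) * ((2 : ℝ) ^ k) ^ (-n / 2) *
      Real.exp (-(1 / (16 * ((2 : ℝ) ^ k) ^ 2)) * (‖ζ.2‖ ^ 2 + ζ.1 ^ 2)) := by
  have h1 : 1 ≤ Real.sqrt (1 + ζ.1 ^ 2) := by
    rw [Real.one_le_sqrt]; nlinarith [sq_nonneg ζ.1]
  obtain ⟨k, hk1, hk2⟩ := exists_nat_pow_near h1 (one_lt_two)
  refine ⟨k, ?_⟩
  unfold wgt
  set x : ℝ := (2 : ℝ) ^ k with hx
  have hx0 : 0 < x := by positivity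
  have hsq : 1 + ζ.1 ^ 2 ≤ 4 * x ^ 2 := by
    have h0 : Real.sqrt (1 + ζ.1 ^ 2) ^ 2 = 1 + ζ.1 ^ 2 := Real.sq_sqrt (by positivity)
    rw [pow_succ (2 : ℝ) k, ← hx] at hk2
    nlinarith
  have hA : (Real.sqrt (1 + ζ.1 ^ 2)) ^ (-n / 2) ≤ x ^ (-n / 2) :=
    Real.rpow_le_rpow_of_nonpos hx0 hk1 (by linarith)
  have hB : Real.exp (-‖ζ.2‖ ^ 2 / (4 * (1 + ζ.1 ^ 2))) ≤
      Real.exp (1 / 4) * Real.exp (-(1 / (16 * x ^ 2)) * (‖ζ.2‖ ^ 2 + ζ.1 ^ 2)) := by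
    rw [← Real.exp_add]
    apply Real.exp_le_exp.2
    have e1 : ‖ζ.2‖ ^ 2 / (16 * x ^ 2) ≤ ‖ζ.2‖ ^ 2 / (4 * (1 + ζ.1 ^ 2)) := by
      apply div_le_div_of_nonneg_left (by positivity) (by positivity)
      linarith
    have e2 : ζ.1 ^ 2 / (16 * x ^ 2) ≤ 1 / 4 := by
      rw [div_le_iff₀ (by positivity)]; linarith
    have e3 : -(1 / (16 * x ^ 2)) * (‖ζ.2‖ ^ 2 + ζ.1 ^ 2) =
      -(‖ζ.2‖ ^ 2 / (16 * x ^ 2)) - ζ.1 ^ 2 / (16 * x ^ 2) := by ring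
    rw [e3, neg_div]; linarith
  calc _ ≤ x ^ (-n / 2) * (Real.exp (1 / 4) * Real.exp (-(1 / (16 * x ^ 2)) * (‖ζ.2‖ ^ 2 + ζ.1 ^ 2))) := by
        gcongr
    _ = _ := by ring

/-- The multi-scale Gaussian Frostman condition. -/
def GFrost (m : Measure (W × ℝ)) (s : ℝ) : Prop :=
  ∃ C : ℝ, ∀ (k : ℕ) (z : W × ℝ),
    ∫ w, Real.exp (-((2 : ℝ) ^ k) ^ 2 * (‖z.1 - w.1‖ ^ 2 + (z.2 - w.2) ^ 2)) ∂m ≤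
      C * ((2 : ℝ) ^ k) ^ (-s)

theorem wgt_lintegral (m : Measure (W × ℝ)) [IsFiniteMeasure m] (s : ℝ) (hm : GFrost m s)
    (hs : (Module.finrank ℝ W : ℝ) / 2 + 1 < s) :
    ∫⁻ ζ : ℝ × W, ENNReal.ofReal (wgt (Module.finrank ℝ W) ζ * ‖ftM m ζ‖ ^ 2)
      ∂(volume.prod volume) < ∞ := by
  obtain ⟨C, hC⟩ := hm
  set n : ℝ := (Module.finrank ℝ W : ℝ) with hn
  have hn0 : 0 ≤ n := by positivity
  have hmeas := ftM_meas m
  have hC0 : 0 ≤ C := by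
    have h1 := hC 0 0
    have h2 : 0 ≤ ∫ w, Real.exp (-((2 : ℝ) ^ 0) ^ 2 * (‖(0 : W × ℝ).1 - w.1‖ ^ 2 + ((0 : W × ℝ).2 - w.2) ^ 2)) ∂m :=
      integral_nonneg fun _ => by positivity
    have := h2.trans h1
    simpa using this
  set T : ℕ → (ℝ × W) → ℝ := fun k ζ => Real.exp (1 / 4) * ((2 : ℝ) ^ k) ^ (-n / 2) *
      (Real.exp (-(1 / (16 * ((2 : ℝ) ^ k) ^ 2)) * (‖ζ.2‖ ^ 2 + ζ.1 ^ 2)) * ‖ftM m ζ‖ ^ 2) with hT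
  set ρ : ℝ := (2 : ℝ) ^ (n / 2 + 1 - s) with hρ
  have hρ1 : ρ < 1 := Real.rpow_lt_one_of_one_lt_of_neg (by norm_num) (by linarith)
  have hρ0 : 0 < ρ := by positivity
  set A : ℝ := Real.exp (1 / 4) * ((16 * Real.pi) ^ ((n + 1) / 2) * (C * (2 : ℝ) ^ (-s) * m.real Set.univ)) with hA
  have hTk : ∀ k, ∫⁻ ζ, ENNReal.ofReal (T k ζ) ∂(volume.prod volume) ≤ ENNReal.ofReal (A * ρ ^ k) := by
    intro k
    set x : ℝ := (2 : ℝ) ^ k with hx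
    have hx0 : 0 < x := by positivity
    have hE := energy_bound m (1 / (16 * x ^ 2)) (C * ((2 : ℝ) ^ (k + 1)) ^ (-s)) (by positivity) (by
      intro z
      refine le_trans (le_of_eq ?_) (hC (k + 1) z)
      congr 1 with w
      congr 1
      rw [pow_succ (2 : ℝ) k, ← hx]
      field_simp
      ring)
    rw [← ofReal_integral_eq_lintegral_ofReal (hE.1.const_mul _)
      (Eventually.of_forall fun ζ => by positivity)]
    apply ENNReal.ofReal_le_ofReal
    rw [integral_const_mul]
    refine (mul_le_mul_of_nonneg_left hE.2 (by positivity)).trans (le_of_eq ?_)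
    have e1 : (Real.pi / (1 / (16 * x ^ 2))) ^ ((n + 1) / 2) = (16 * Real.pi) ^ ((n + 1) / 2) * x ^ (n + 1) := by
      rw [show Real.pi / (1 / (16 * x ^ 2)) = (16 * Real.pi) * x ^ 2 by field_simp,
        Real.mul_rpow (by positivity) (by positivity), ← Real.rpow_natCast x 2, ← Real.rpow_mul hx0.le]
      congr 2; push_cast; ring
    have e2 : ((2 : ℝ) ^ (k + 1)) ^ (-s) = x ^ (-s) * (2 : ℝ) ^ (-s) := by
      rw [pow_succ, Real.mul_rpow (by positivity) (by positivity)]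
    have e3 : ρ ^ k = x ^ (-n / 2) * x ^ (n + 1) * x ^ (-s) := by
      rw [← Real.rpow_add hx0, ← Real.rpow_add hx0, hρ, hx, ← Real.rpow_natCast, ← Real.rpow_natCast,
        ← Real.rpow_mul (by norm_num), ← Real.rpow_mul (by norm_num)]
      congr 1; ring
    rw [← hn, e1, e2, e3, hA]
    ring
  calc _ ≤ ∫⁻ ζ : ℝ × W, ∑' k, ENNReal.ofReal (T k ζ) ∂(volume.prod volume) := by
        apply lintegral_mono
        intro ζ
        obtain ⟨k, hk⟩ := wgt_le n hn0 ζ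
        refine le_trans ?_ (ENNReal.le_tsum k)
        apply ENNReal.ofReal_le_ofReal
        rw [hT]
        simp only
        rw [← mul_assoc]
        gcongr
    _ = ∑' k, ∫⁻ ζ : ℝ × W, ENNReal.ofReal (T k ζ) ∂(volume.prod volume) := by
        apply lintegral_tsum
        intro k
        apply Measurable.aemeasurable
        fun_prop
    _ ≤ ∑' k, ENNReal.ofReal (A * ρ ^ k) := ENNReal.tsum_le_tsum hTk
    _ < ∞ := by
        have hA0 : 0 ≤ A := by positivity
        rw [← ENNReal.ofReal_tsum_of_nonneg (fun k => by positivity)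
          ((summable_geometric_of_lt_one hρ0.le hρ1).mul_left A)]
        exact ENNReal.ofReal_lt_top

theorem charFun_bound (m m' : Measure (W × ℝ)) [IsFiniteMeasure m] [IsFiniteMeasure m'] (τ : ℝ) :
    ‖∫ y : (W × ℝ) × (W × ℝ), (Real.exp (-‖y.1.1 - y.2.1‖ ^ 2) : ℂ) *
      cexp (τ * ((‖y.1.1 - y.2.1‖ ^ 2 + (y.1.2 - y.2.2) : ℝ) : ℂ) * I) ∂(m.prod m')‖ₑ ≤
    ∫⁻ ξ : W, ENNReal.ofReal (wgt (Module.finrank ℝ W) (τ, ξ) * ‖ftM m (τ, ξ)‖ ^ 2 +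
      wgt (Module.finrank ℝ W) (τ, ξ) * ‖ftM m' (τ, ξ)‖ ^ 2) := by
  set n := Module.finrank ℝ W with hn
  set B : ℂ := 1 - τ * I with hB
  have hBre : B.re = 1 := by simp [hB]
  have hB0 : B ≠ 0 := fun h => by rw [h] at hBre; simp at hBre
  have hnsq : normSq B = 1 + τ ^ 2 := by
    simp [hB, normSq_apply]; ring
  set b : ℂ := 1 / (4 * B) with hb
  have hbre : b.re = 1 / (4 * (1 + τ ^ 2)) := by
    rw [hb, one_div, mul_inv, ← hnsq]
    have : ((4 : ℂ)⁻¹) = ((4⁻¹ : ℝ) : ℂ) := by push_cast; rfl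
    rw [this, Complex.re_ofReal_mul, Complex.inv_re, hBre]
    field_simp
  have hb0 : 0 < b.re := by rw [hbre]; positivity
  have hbne : b ≠ 0 := by rw [hb]; simp [hB0]
  have hsw := gauss_swap (m.prod m') (fun y => y.1.1 - y.2.1) (by fun_prop)
    (fun y => cexp (I * ((τ * (y.1.2 - y.2.2) : ℝ) : ℂ))) (by fun_prop)
    (fun y => by rw [mul_comm]; exact (norm_exp_ofReal_mul_I _).le) b hb0
  simp_rw [ftM_mul_conj] at hsw
  have hcn : ‖((Real.pi : ℂ) / b) ^ (n / 2 : ℂ)‖ =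
      (4 * Real.pi) ^ ((n : ℝ) / 2) * (Real.sqrt (1 + τ ^ 2)) ^ ((n : ℝ) / 2) := by
    rw [show (n / 2 : ℂ) = ((n / 2 : ℝ) : ℂ) by push_cast; rfl, Complex.norm_cpow_real,
      ← Real.mul_rpow (by positivity) (by positivity)]
    congr 1
    rw [hb, show (Real.pi : ℂ) / (1 / (4 * B)) = ((4 * Real.pi : ℝ) : ℂ) * B by
      push_cast; field_simp, norm_mul, Complex.norm_real, Real.norm_of_nonneg (by positivity),
      Complex.norm_def, hnsq]
  have hS : 0 < Real.sqrt (1 + τ ^ 2) := Real.sqrt_pos.2 (by positivity)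
  have hlow : (Real.sqrt (1 + τ ^ 2)) ^ ((n : ℝ) / 2) ≤ ‖((Real.pi : ℂ) / b) ^ (n / 2 : ℂ)‖ := by
    rw [hcn]
    apply le_mul_of_one_le_left (by positivity)
    apply Real.one_le_rpow _ (by positivity)
    nlinarith [Real.pi_gt_three]
  set J := ∫ y : (W × ℝ) × (W × ℝ), (Real.exp (-‖y.1.1 - y.2.1‖ ^ 2) : ℂ) *
      cexp (τ * ((‖y.1.1 - y.2.1‖ ^ 2 + (y.1.2 - y.2.2) : ℝ) : ℂ) * I) ∂(m.prod m') with hJ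
  have hJ' : ∫ y : (W × ℝ) × (W × ℝ), cexp (I * ((τ * (y.1.2 - y.2.2) : ℝ) : ℂ)) *
      cexp (-‖y.1.1 - y.2.1‖ ^ 2 / (4 * b)) ∂(m.prod m') = J := by
    rw [hJ]
    congr 1 with y
    rw [Complex.ofReal_exp, ← Complex.exp_add, ← Complex.exp_add]
    congr 1
    rw [hb, show ∀ x : ℂ, x / (4 * (1 / (4 * B))) = x * B by intro x; field_simp, hB]
    push_cast
    ring
  rw [hJ'] at hsw
  have hJn : ‖J‖ₑ = ‖(((Real.sqrt (1 + τ ^ 2)) ^ (-(n : ℝ) / 2) : ℝ) : ℂ) * ((((Real.sqrt (1 + τ ^ 2)) ^ ((n : ℝ) / 2) : ℝ) : ℂ) * J)‖ₑ := by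
    rw [← mul_assoc, ← Complex.ofReal_mul, ← Real.rpow_add hS]
    simp [neg_div]
  have hJ2 : ‖J‖ₑ ≤ ‖(((Real.sqrt (1 + τ ^ 2)) ^ (-(n : ℝ) / 2) : ℝ) : ℂ) *
      ∫ ξ : W, cexp (-b * ‖ξ‖ ^ 2) * (ftM m (τ, ξ) * (starRingEnd ℂ) (ftM m' (τ, ξ)))‖ₑ := by
    rw [hJn, hsw, enorm_le_iff_norm_le]
    simp only [norm_mul]
    gcongr
    rw [Complex.norm_real, Real.norm_of_nonneg (by positivity)]
    exact hlow
  refine hJ2.trans ?_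
  rw [← integral_const_mul]
  refine (enorm_integral_le_lintegral_enorm _).trans ?_
  apply lintegral_mono
  intro ξ
  simp only
  rw [← ofReal_norm]
  apply ENNReal.ofReal_le_ofReal
  rw [← mul_assoc, norm_mul, norm_mul _ ((starRingEnd ℂ) _), norm_mul, RCLike.norm_conj]
  have hw : ‖(((Real.sqrt (1 + τ ^ 2)) ^ (-(n : ℝ) / 2) : ℝ) : ℂ)‖ * ‖cexp (-b * ‖ξ‖ ^ 2)‖ = wgt n (τ, ξ) := by
    rw [Complex.norm_real, Real.norm_of_nonneg (by positivity), Complex.norm_exp, wgt]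
    congr 2
    rw [← Complex.ofReal_pow, Complex.re_mul_ofReal, Complex.neg_re, hbre]
    field_simp
  rw [hw, ← mul_add]
  have hw0 : 0 ≤ wgt (n : ℝ) (τ, ξ) := by unfold wgt; positivity
  gcongr
  nlinarith [sq_nonneg (‖ftM m (τ, ξ)‖ - ‖ftM m' (τ, ξ)‖), sq_nonneg (‖ftM m (τ, ξ)‖), sq_nonneg (‖ftM m' (τ, ξ)‖)]

theorem wgt_meas (n : ℝ) : Measurable (wgt n : ℝ × W → ℝ) := by
  unfold wgt
  fun_prop

theorem interior_product (m m' : Measure (W × ℝ)) [IsFiniteMeasure m] [IsFiniteMeasure m']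
    (hm0 : m ≠ 0) (hm0' : m' ≠ 0) (s : ℝ) (hm : GFrost m s) (hm' : GFrost m' s)
    (hs : (Module.finrank ℝ W : ℝ) / 2 + 1 < s) (A A' : Set (W × ℝ)) (hA : IsCompact A)
    (hA' : IsCompact A') (hmA : m Aᶜ = 0) (hmA' : m' A'ᶜ = 0) :
    (interior ((fun y : (W × ℝ) × (W × ℝ) => ‖y.1.1 - y.2.1‖ ^ 2 + (y.1.2 - y.2.2)) ''
      (A ×ˢ A'))).Nonempty := by
  set Φ : (W × ℝ) × (W × ℝ) → ℝ := fun y => ‖y.1.1 - y.2.1‖ ^ 2 + (y.1.2 - y.2.2) with hΦ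
  have hΦc : Continuous Φ := by rw [hΦ]; fun_prop
  set dens : (W × ℝ) × (W × ℝ) → ℝ≥0∞ := fun y => ENNReal.ofReal (Real.exp (-‖y.1.1 - y.2.1‖ ^ 2)) with hdens
  have hdm : Measurable dens := by rw [hdens]; fun_prop
  have hd1 : ∀ y, dens y ≤ 1 := by
    intro y
    rw [hdens]
    simp only
    rw [ENNReal.ofReal_le_one, Real.exp_le_one_iff]
    simp
  set κ₀ := (m.prod m').withDensity dens with hκ₀
  have : IsFiniteMeasure κ₀ := isFiniteMeasure_withDensity (by
    refine ne_of_lt (lt_of_le_of_lt (lintegral_mono hd1) ?_)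
    simp [measure_lt_top])
  set κ := κ₀.map Φ with hκ
  have hprod0 : m.prod m' ≠ 0 := by
    rw [Ne, ← Measure.measure_univ_eq_zero, ← Set.univ_prod_univ, Measure.prod_prod, mul_eq_zero, not_or,
      Measure.measure_univ_eq_zero, Measure.measure_univ_eq_zero]
    exact ⟨hm0, hm0'⟩
  have hcf : ∀ τ : ℝ, charFun κ τ = ∫ y : (W × ℝ) × (W × ℝ), (Real.exp (-‖y.1.1 - y.2.1‖ ^ 2) : ℂ) *
      cexp (τ * ((‖y.1.1 - y.2.1‖ ^ 2 + (y.1.2 - y.2.2) : ℝ) : ℂ) * I) ∂(m.prod m') := by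
    intro τ
    rw [charFun_apply_real, hκ, integral_map hΦc.aemeasurable
      (Continuous.aestronglyMeasurable (by fun_prop)), hκ₀,
      integral_withDensity_eq_integral_toReal_smul hdm
        (Eventually.of_forall fun y => ENNReal.ofReal_lt_top)]
    congr 1 with y
    rw [hdens]
    simp only
    rw [ENNReal.toReal_ofReal (by positivity), Complex.real_smul]
  apply interior_of_integrable_charFun κ
  · rw [hκ, Ne, Measure.map_eq_zero_iff hΦc.aemeasurable, hκ₀, withDensity_eq_zero_iff hdm.aemeasurable]
    intro h
    apply hprod0
    rw [← ae_eq_bot, ← Filter.empty_mem_iff_bot]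
    filter_upwards [h] with y hy
    have : 0 < dens y := ENNReal.ofReal_pos.2 (Real.exp_pos _)
    simp only [Pi.zero_apply] at hy
    rw [hy] at this
    exact absurd this (lt_irrefl _)
  · exact ((hA.prod hA').image hΦc).isClosed
  · have hcl : MeasurableSet (Φ '' (A ×ˢ A'))ᶜ := ((hA.prod hA').image hΦc).isClosed.measurableSet.compl
    rw [hκ, Measure.map_apply hΦc.measurable hcl]
    apply withDensity_absolutelyContinuous
    refine measure_mono_null (t := (A ×ˢ A')ᶜ) ?_ ?_
    · intro y hy hyA
      exact hy ⟨y, hyA, rfl⟩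
    · rw [Set.compl_prod_eq_union]
      simp [measure_union_null_iff, Measure.prod_prod, hmA, hmA']
  · refine ⟨continuous_charFun.aestronglyMeasurable, ?_⟩
    have h1 := wgt_lintegral m s hm hs
    have h2 := wgt_lintegral m' s hm' hs
    have e1 := ftM_meas m
    have e2 := ftM_meas m'
    have e3 := wgt_meas (W := W) (Module.finrank ℝ W)
    have hw0 : ∀ ζ : ℝ × W, 0 ≤ wgt (Module.finrank ℝ W : ℝ) ζ := fun ζ => by unfold wgt; positivity
    calc ∫⁻ τ, ‖charFun κ τ‖ₑ ≤ ∫⁻ τ : ℝ, ∫⁻ ξ : W,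
        ENNReal.ofReal (wgt (Module.finrank ℝ W) (τ, ξ) * ‖ftM m (τ, ξ)‖ ^ 2 +
          wgt (Module.finrank ℝ W) (τ, ξ) * ‖ftM m' (τ, ξ)‖ ^ 2) := by
          apply lintegral_mono
          intro τ
          simp only
          rw [hcf]
          exact charFun_bound m m' τ
      _ = ∫⁻ ζ : ℝ × W, ENNReal.ofReal (wgt (Module.finrank ℝ W) ζ * ‖ftM m ζ‖ ^ 2 +
          wgt (Module.finrank ℝ W) ζ * ‖ftM m' ζ‖ ^ 2) ∂(volume.prod volume) := by
          rw [lintegral_prod _ (Measurable.aemeasurable (by fun_prop))]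
      _ = ∫⁻ ζ : ℝ × W, (ENNReal.ofReal (wgt (Module.finrank ℝ W) ζ * ‖ftM m ζ‖ ^ 2) +
          ENNReal.ofReal (wgt (Module.finrank ℝ W) ζ * ‖ftM m' ζ‖ ^ 2)) ∂(volume.prod volume) := by
          congr 1 with ζ
          rw [ENNReal.ofReal_add (mul_nonneg (hw0 _) (by positivity)) (mul_nonneg (hw0 _) (by positivity))]
      _ < ∞ := by
          rw [lintegral_add_left (by fun_prop)]
          exact ENNReal.add_lt_top.2 ⟨h1, h2⟩
end

section Frostman
open MeasureTheory Filter Topology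

open Classical in
lemma weighted_cover {X V : Type*} (code : ℕ → X → V) (c : ℕ → ℝ) (hc : ∀ k, 0 ≤ c k)
    (href : ∀ j k, j ≤ k → ∀ x y, code k x = code k y → code j x = code j y)
    (K : Set X) (H : ℝ) (hH0 : 0 ≤ H)
    (hH : ∀ S : Finset (ℕ × V), (∀ x ∈ K, ∃ q ∈ S, code q.1 x = q.2) → H ≤ ∑ q ∈ S, c q.1) :
    ∀ (n : ℕ) (S : Finset (ℕ × V)) (w : ℕ × V → ℝ) (t : ℝ), S.card = n → (∀ q ∈ S, 0 ≤ w q) →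
      (∀ x ∈ K, t ≤ ∑ q ∈ S, if code q.1 x = q.2 then w q else 0) →
      t * H ≤ ∑ q ∈ S, w q * c q.1 := by
  intro n
  induction n with
  | zero =>
    intro S w t hS hw ht
    have : S = ∅ := Finset.card_eq_zero.mp hS
    subst this
    simp only [Finset.sum_empty] at ht ⊢
    by_cases hK : K.Nonempty
    · obtain ⟨x, hx⟩ := hK
      exact mul_nonpos_of_nonpos_of_nonneg (ht x hx) hH0
    · have := hH ∅ (fun x hx => (hK ⟨x, hx⟩).elim)
      simp only [Finset.sum_empty] at this
      have : H = 0 := le_antisymm this hH0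
      simp [this]
  | succ n ih =>
    intro S w t hS hw ht
    by_cases ht0 : t ≤ 0
    · exact (mul_nonpos_of_nonpos_of_nonneg ht0 hH0).trans
        (Finset.sum_nonneg fun q hq => mul_nonneg (hw q hq) (hc _))
    push Not at ht0
    set M : Finset (ℕ × V) := S.filter
      (fun q => ∀ r ∈ S, r.1 < q.1 → ∀ y, code q.1 y = q.2 → code r.1 y ≠ r.2) with hM
    have hex : ∀ x ∈ K, ∃ q ∈ M, code q.1 x = q.2 := by
      intro x hx
      have hne : (S.filter (fun q => code q.1 x = q.2)).Nonempty := by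
        by_contra hcon
        rw [Finset.not_nonempty_iff_eq_empty] at hcon
        have := ht x hx
        rw [← Finset.sum_filter, hcon, Finset.sum_empty] at this
        linarith
      obtain ⟨q, hq, hmin⟩ := Finset.exists_min_image _ (fun q : ℕ × V => q.1) hne
      rw [Finset.mem_filter] at hq
      refine ⟨q, ?_, hq.2⟩
      rw [hM, Finset.mem_filter]
      refine ⟨hq.1, ?_⟩
      intro r hr hrq y hy hcon
      have h1 : code r.1 y = code r.1 x := href _ _ hrq.le _ _ (hy.trans hq.2.symm)
      have := hmin r (Finset.mem_filter.mpr ⟨hr, h1 ▸ hcon⟩)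
      change q.1 ≤ r.1 at this
      omega
    have huniq : ∀ x, ∀ q ∈ M, ∀ r ∈ M, code q.1 x = q.2 → code r.1 x = r.2 → q = r := by
      intro x q hq r hr hqx hrx
      rw [hM, Finset.mem_filter] at hq hr
      rcases lt_trichotomy q.1 r.1 with h | h | h
      · exact (hr.2 q hq.1 h x hrx hqx).elim
      · apply Prod.ext h
        rw [← hqx, ← hrx, h]
      · exact (hq.2 r hr.1 h x hqx hrx).elim
    have hHM := hH M hex
    by_cases hMne : M.Nonempty
    swap
    · rw [Finset.not_nonempty_iff_eq_empty] at hMne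
      rw [hMne, Finset.sum_empty] at hHM
      have : H = 0 := le_antisymm hHM hH0
      rw [this, mul_zero]
      exact Finset.sum_nonneg fun q hq => mul_nonneg (hw q hq) (hc _)
    obtain ⟨q0, hq0, hmin⟩ := Finset.exists_min_image M w hMne
    have hMS : M ⊆ S := Finset.filter_subset _ _
    have hw0 : 0 ≤ w q0 := hw q0 (hMS hq0)
    set w' : ℕ × V → ℝ := fun q => w q - if q ∈ M then w q0 else 0 with hw'
    have hw'0 : w' q0 = 0 := by simp [hw', hq0]
    have key := ih (S.erase q0) w' (t - w q0)
      (by rw [Finset.card_erase_of_mem (hMS hq0), hS]; rfl) ?_ ?_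
    · rw [Finset.sum_erase _ (by simp [hw'0])] at key
      have e : ∑ q ∈ S, w' q * c q.1 = ∑ q ∈ S, w q * c q.1 - w q0 * ∑ q ∈ M, c q.1 := by
        simp only [hw', sub_mul, Finset.sum_sub_distrib]
        congr 1
        rw [Finset.mul_sum]
        simp only [ite_mul, zero_mul]
        rw [← Finset.sum_filter, Finset.filter_mem_eq_inter, Finset.inter_eq_right.mpr hMS]
      rw [e] at key
      nlinarith [mul_le_mul_of_nonneg_left hHM hw0]
    · intro q hq
      have hqS := Finset.mem_of_mem_erase hq
      simp only [hw']
      split_ifs with h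
      · linarith [hmin q h]
      · linarith [hw q hqS]
    · intro x hx
      rw [Finset.sum_erase _ (by simp [hw'0])]
      have h1 := ht x hx
      obtain ⟨r, hr, hrx⟩ := hex x hx
      have e : (∑ q ∈ S, if code q.1 x = q.2 then w' q else 0)
          = (∑ q ∈ S, if code q.1 x = q.2 then w q else 0) - w q0 := by
        have : ∀ q ∈ S, (if code q.1 x = q.2 then w' q else 0)
            = (if code q.1 x = q.2 then w q else 0) - if q = r then w q0 else 0 := by
          intro q hq
          by_cases hqx : code q.1 x = q.2
          · simp only [hqx, if_true, hw']
            congr 1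
            by_cases hqM : q ∈ M
            · rw [huniq x q hqM r hr hqx hrx]; simp [hr]
            · have : q ≠ r := fun h => hqM (h ▸ hr)
              simp [hqM, this]
          · have : q ≠ r := fun h => hqx (h ▸ hrx)
            simp [hqx, this]
        rw [Finset.sum_congr rfl this, Finset.sum_sub_distrib]
        congr 1
        simp [hMS hr]
      rw [e]; linarith

/-- dyadic code of level `k`. -/
noncomputable def dcode (d : ℕ) (k : ℕ) (x : EuclideanSpace ℝ (Fin d)) : Fin d → ℤ := fun i => ⌊(2:ℝ)^k * x i⌋

lemma dcode_ref (d : ℕ) (j k : ℕ) (hjk : j ≤ k) (x y : EuclideanSpace ℝ (Fin d))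
    (h : dcode d k x = dcode d k y) : dcode d j x = dcode d j y := by
  obtain ⟨m, rfl⟩ := Nat.exists_eq_add_of_le hjk
  have key : ∀ z : EuclideanSpace ℝ (Fin d), ∀ i, dcode d j z i = dcode d (j+m) z i / ((2^m : ℕ) : ℤ) := by
    intro z i
    unfold dcode
    rw [← Int.natCast_mul_floor_div_cancel (n := 2^m) (by positivity) ((2:ℝ)^j * z i)]
    congr 2
    push_cast
    ring
  funext i
  rw [key, key, h]

lemma dcode_dist (d k : ℕ) (x y : EuclideanSpace ℝ (Fin d)) (h : dcode d k x = dcode d k y) :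
    dist x y ≤ √d * ((2:ℝ)^k)⁻¹ := by
  have hi : ∀ i, dist (x i) (y i) ^ 2 ≤ (((2:ℝ)^k)⁻¹)^2 := by
    intro i
    have h2 : (0:ℝ) < 2^k := by positivity
    have := Int.abs_sub_lt_one_of_floor_eq_floor (congrFun h i)
    rw [← mul_sub, abs_mul, abs_of_pos h2] at this
    rw [Real.dist_eq]
    apply pow_le_pow_left₀ (abs_nonneg _)
    rw [← one_div, le_div_iff₀ h2]
    linarith
  rw [EuclideanSpace.dist_eq]
  calc √(∑ i, dist (x i) (y i) ^ 2) ≤ √(∑ i : Fin d, (((2:ℝ)^k)⁻¹)^2) :=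
        Real.sqrt_le_sqrt (Finset.sum_le_sum fun i _ => hi i)
    _ = √d * ((2:ℝ)^k)⁻¹ := by
        simp only [Finset.sum_const, Finset.card_univ, Fintype.card_fin, nsmul_eq_mul]
        rw [Real.sqrt_mul (by positivity), Real.sqrt_sq (by positivity)]

lemma content_pos (d : ℕ) (K : Set (EuclideanSpace ℝ (Fin d))) (s : NNReal) (hs : 0 < s)
    (hK : (s : ℝ≥0∞) < dimH K) :
    ∃ H : ℝ, 0 < H ∧ ∀ S : Finset (ℕ × (Fin d → ℤ)),
      (∀ x ∈ K, ∃ q ∈ S, dcode d q.1 x = q.2) → H ≤ ∑ q ∈ S, ((2:ℝ)^q.1) ^ (-(s:ℝ)) := by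
  by_contra hcon
  push Not at hcon
  have h1 : ∀ j : ℕ, ∃ S : Finset (ℕ × (Fin d → ℤ)), (∀ x ∈ K, ∃ q ∈ S, dcode d q.1 x = q.2) ∧
      ∑ q ∈ S, ((2:ℝ)^q.1) ^ (-(s:ℝ)) < 1/((j:ℝ)+1) := fun j => hcon _ (by positivity)
  choose S hScov hSsum using h1
  have hs' : (0:ℝ) < s := by exact_mod_cast hs
  have hinf := hausdorffMeasure_of_lt_dimH hK
  have hlev : ∀ j, ∀ q ∈ S j, ((2:ℝ)^q.1)⁻¹ ≤ (1/((j:ℝ)+1))^(1/(s:ℝ)) := by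
    intro j q hq
    have h2 : ((2:ℝ)^q.1) ^ (-(s:ℝ)) ≤ 1/((j:ℝ)+1) :=
      (Finset.single_le_sum (f := fun q : ℕ × (Fin d → ℤ) => ((2:ℝ)^q.1) ^ (-(s:ℝ)))
        (fun q _ => by positivity) hq).trans (hSsum j).le
    have h3 := Real.rpow_le_rpow (by positivity) h2 (by positivity : 0 ≤ 1/(s:ℝ))
    rw [← Real.rpow_mul (by positivity)] at h3
    have : -(s:ℝ) * (1/s) = -1 := by field_simp
    rwa [this, Real.rpow_neg_one] at h3
  have hdiam : ∀ (j k : ℕ) (v : Fin d → ℤ), Metric.ediam {x | dcode d k x = v} ≤ ENNReal.ofReal (√d * ((2:ℝ)^k)⁻¹) := by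
    intro j k v
    apply Metric.ediam_le
    intro x hx y hy
    rw [edist_dist]
    exact ENNReal.ofReal_le_ofReal (dcode_dist d k x y (hx.trans hy.symm))
  have hb := Measure.hausdorffMeasure_le_liminf_sum (s : ℝ) K (l := atTop) (ι := fun j => ↥(S j))
    (fun j => ENNReal.ofReal (√d * (1/((j:ℝ)+1))^(1/(s:ℝ)))) ?_
    (fun j q => {x | dcode d q.1.1 x = q.1.2}) ?_ ?_
  · rw [hinf, top_le_iff] at hb
    have : liminf (fun j : ℕ => ∑ q : ↥(S j), Metric.ediam {x | dcode d q.1.1 x = q.1.2} ^ (s:ℝ)) atTop ≤ ENNReal.ofReal (√d ^ (s:ℝ)) := by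
      apply liminf_le_of_le
      · isBoundedDefault
      intro b hb
      obtain ⟨j, hj⟩ := hb.exists
      refine hj.trans ?_
      calc ∑ q : ↥(S j), Metric.ediam {x | dcode d q.1.1 x = q.1.2} ^ (s:ℝ)
          ≤ ∑ q : ↥(S j), ENNReal.ofReal (√d ^ (s:ℝ) * ((2:ℝ)^q.1.1)^(-(s:ℝ))) := by
            apply Finset.sum_le_sum
            intro q _
            refine (ENNReal.rpow_le_rpow (hdiam j _ _) hs'.le).trans ?_
            rw [ENNReal.ofReal_rpow_of_nonneg (by positivity) hs'.le,
              Real.mul_rpow (by positivity) (by positivity), Real.inv_rpow (by positivity),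
              Real.rpow_neg (by positivity)]
        _ = ENNReal.ofReal (√d ^ (s:ℝ) * ∑ q ∈ S j, ((2:ℝ)^q.1)^(-(s:ℝ))) := by
            rw [← ENNReal.ofReal_sum_of_nonneg (fun _ _ => by positivity), ← Finset.mul_sum]
            rw [Finset.sum_coe_sort (S j) (fun q => ((2:ℝ)^q.1)^(-(s:ℝ)))]
        _ ≤ ENNReal.ofReal (√d ^ (s:ℝ)) := by
            apply ENNReal.ofReal_le_ofReal
            apply mul_le_of_le_one_right (by positivity)
            refine (hSsum j).le.trans ?_
            rw [div_le_one (by positivity)]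
            linarith [(Nat.cast_nonneg j : (0:ℝ) ≤ j)]
    rw [hb] at this
    exact absurd this (by simp)
  · have : Tendsto (fun j : ℕ => √d * (1/((j:ℝ)+1))^(1/(s:ℝ))) atTop (𝓝 (√d * 0^(1/(s:ℝ)))) :=
      ((tendsto_one_div_add_atTop_nhds_zero_nat).rpow_const (Or.inr (by positivity))).const_mul _
    rw [Real.zero_rpow (by positivity), mul_zero] at this
    simpa using ENNReal.tendsto_ofReal this
  · refine Eventually.of_forall fun j q => (hdiam j _ _).trans (ENNReal.ofReal_le_ofReal ?_)
    exact mul_le_mul_of_nonneg_left (hlev j q.1 q.2) (by positivity)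
  · refine Eventually.of_forall fun j x hx => ?_
    obtain ⟨q, hq, hqx⟩ := hScov j x hx
    exact Set.mem_iUnion.mpr ⟨⟨q, hq⟩, hqx⟩

open CompactlySupported in
lemma frostman_functional {X Q : Type*} [TopologicalSpace X] [CompactSpace X] [T2Space X]
    [MeasurableSpace X] [BorelSpace X] (cov : (Q →₀ ℝ) →ₗ[ℝ] (X → ℝ)) (cost : (Q →₀ ℝ) →ₗ[ℝ] ℝ)
    (hcost : ∀ w, 0 ≤ w → 0 ≤ cost w)
    (hbig : ∃ w0 : Q →₀ ℝ, 0 ≤ w0 ∧ ∀ x, 1 ≤ cov w0 x) (hcov : ∀ w, 0 ≤ w → ∀ x, 0 ≤ cov w x)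
    (H : ℝ) (hH0 : 0 < H)
    (hH : ∀ (t : ℝ) (w : Q →₀ ℝ), 0 ≤ w → (∀ x, t ≤ cov w x) → t * H ≤ cost w) :
    ∃ μ : Measure X, IsFiniteMeasure μ ∧ μ ≠ 0 ∧ ∀ (f : C(X, ℝ)) (w : Q →₀ ℝ), 0 ≤ w →
      (∀ x, f x ≤ cov w x) → ∫ x, f x ∂μ ≤ cost w := by
  set P : C_c(X, ℝ) → Set ℝ := fun f => {r | ∃ w, 0 ≤ w ∧ (∀ x, f x ≤ cov w x) ∧ cost w = r} with hP
  have hbdd : ∀ f, BddBelow (P f) := by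
    intro f
    refine ⟨0, ?_⟩
    rintro r ⟨w, hw, -, rfl⟩
    exact hcost w hw
  have hne : ∀ f, (P f).Nonempty := by
    intro f
    obtain ⟨w0, hw0, h1⟩ := hbig
    obtain ⟨B, hB⟩ := (isCompact_range f.continuous).bddAbove
    refine ⟨_, (max B 0) • w0, smul_nonneg (le_max_right _ _) hw0, fun x => ?_, rfl⟩
    have h2 : f x ≤ B := hB ⟨x, rfl⟩
    rw [map_smul, Pi.smul_apply, smul_eq_mul]
    calc f x ≤ max B 0 := h2.trans (le_max_left _ _)
      _ = max B 0 * 1 := (mul_one _).symm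
      _ ≤ _ := mul_le_mul_of_nonneg_left (h1 x) (le_max_right _ _)
  set p : C_c(X, ℝ) → ℝ := fun f => sInf (P f) with hp
  have hle : ∀ f w, 0 ≤ w → (∀ x, f x ≤ cov w x) → p f ≤ cost w :=
    fun f w hw h => csInf_le (hbdd f) ⟨w, hw, h, rfl⟩
  have hsm1 : ∀ (c : ℝ), 0 < c → ∀ f, p (c • f) ≤ c * p f := by
    intro c hc f
    have : c⁻¹ * p (c • f) ≤ p f := by
      apply le_csInf (hne f)
      rintro r ⟨w, hw, h, rfl⟩
      have := hle (c • f) (c • w) (smul_nonneg hc.le hw) (fun x => by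
        rw [map_smul, Pi.smul_apply, smul_eq_mul, CompactlySupportedContinuousMap.smul_apply,
          smul_eq_mul]
        exact mul_le_mul_of_nonneg_left (h x) hc.le)
      rw [map_smul, smul_eq_mul] at this
      rwa [inv_mul_le_iff₀ hc]
    rwa [inv_mul_le_iff₀ hc] at this
  have hsm : ∀ (c : ℝ), 0 < c → ∀ f, p (c • f) = c * p f := by
    intro c hc f
    apply le_antisymm (hsm1 c hc f)
    have := hsm1 c⁻¹ (inv_pos.mpr hc) (c • f)
    rw [smul_smul, inv_mul_cancel₀ hc.ne', one_smul] at this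
    rwa [le_inv_mul_iff₀ hc] at this
  have hadd : ∀ f g, p (f + g) ≤ p f + p g := by
    intro f g
    rw [← sub_le_iff_le_add]
    apply le_csInf (hne f)
    rintro r ⟨w, hw, h, rfl⟩
    rw [sub_le_iff_le_add, ← sub_le_iff_le_add']
    apply le_csInf (hne g)
    rintro r ⟨w', hw', h', rfl⟩
    rw [sub_le_iff_le_add', ← map_add]
    apply hle _ _ (add_nonneg hw hw')
    intro x
    rw [map_add]
    exact add_le_add (h x) (h' x)
  by_cases hX : Nonempty X
  swap
  · exfalso
    have := hH 1 0 le_rfl (fun x => (hX ⟨x⟩).elim)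
    simp at this
    linarith
  set one : C_c(X, ℝ) := CompactlySupportedContinuousMap.continuousMapEquiv (1 : C(X, ℝ)) with hone
  have hone1 : ∀ x, one x = 1 := fun x => rfl
  have hone0 : one ≠ 0 := by
    intro h
    obtain ⟨x⟩ := hX
    have := hone1 x
    rw [h] at this
    simp at this
  obtain ⟨g, hg1, hg2⟩ := exists_extension_of_le_sublinear
    (LinearPMap.mkSpanSingleton one H hone0) p hsm hadd (by
      rintro ⟨x, hx⟩
      obtain ⟨t, rfl⟩ := Submodule.mem_span_singleton.mp hx
      refine le_of_eq_of_le (LinearPMap.mkSpanSingleton'_apply _ _ _ t hx) ?_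
      rw [RingHom.id_apply]
      apply le_csInf (hne _)
      rintro r ⟨w, hw, h, rfl⟩
      rw [smul_eq_mul]
      apply hH t w hw
      intro x
      have := h x
      simpa [hone1] using this)
  have hgone : g one = H := by
    have := hg1 ⟨one, Submodule.mem_span_singleton_self one⟩
    refine this.trans (LinearPMap.mkSpanSingleton'_apply_self _ _ _ _)
  have hgpos : ∀ f, 0 ≤ f → 0 ≤ g f := by
    intro f hf
    have h1 := hg2 (-f)
    have h2 := hle (-f) 0 le_rfl (fun x => by
      have : 0 ≤ f x := hf x
      simpa using this)
    rw [map_zero] at h2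
    rw [map_neg] at h1
    linarith
  set Λ : C_c(X, ℝ) →ₚ[ℝ] ℝ := PositiveLinearMap.mk₀ g hgpos with hΛ
  refine ⟨RealRMK.rieszMeasure Λ, ?_, ?_, ?_⟩
  · infer_instance
  · intro h0
    have h1 := RealRMK.integral_rieszMeasure Λ one
    rw [h0, integral_zero_measure] at h1
    have : Λ one = H := hgone
    linarith
  · intro f w hw h
    have h1 := RealRMK.integral_rieszMeasure Λ (CompactlySupportedContinuousMap.continuousMapEquiv f)
    have h2 : ∫ x, f x ∂(RealRMK.rieszMeasure Λ) = g (CompactlySupportedContinuousMap.continuousMapEquiv f) := h1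
    rw [h2]
    exact (hg2 _).trans (hle _ w hw h)

/-- one-dimensional majorant weights -/
noncomputable def hwt (m : ℤ) : ℝ := Real.exp (2 - |(m:ℝ)|)

lemma hwt_summable : Summable hwt := by
  have h0 : Summable (fun n : ℕ => Real.exp 2 * Real.exp (-(n:ℝ))) :=
    Real.summable_exp_neg_nat.mul_left _
  apply Summable.of_nat_of_neg
  · refine h0.congr fun n => ?_
    unfold hwt
    rw [← Real.exp_add]
    simp [sub_eq_add_neg]
  · refine h0.congr fun n => ?_
    unfold hwt
    rw [← Real.exp_add]
    simp [sub_eq_add_neg]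

lemma hwt_nonneg (m : ℤ) : 0 ≤ hwt m := (Real.exp_pos _).le

lemma gauss_one (a b : ℝ) : Real.exp (-(a - b)^2) ≤ hwt (⌊b⌋ - ⌊a⌋) := by
  unfold hwt
  apply Real.exp_le_exp.mpr
  have h1 := Int.floor_le a
  have h2 := Int.lt_floor_add_one a
  have h3 := Int.floor_le b
  have h4 := Int.lt_floor_add_one b
  have h5 : |((⌊b⌋ - ⌊a⌋ : ℤ) : ℝ)| ≤ |a - b| + 1 := by
    push_cast
    rw [abs_le]
    constructor <;> cases abs_cases (a - b) <;> linarith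
  nlinarith [sq_nonneg (|a - b| - 1/2), sq_abs (a - b)]

lemma gauss_le (d k : ℕ) (x y : EuclideanSpace ℝ (Fin d)) :
    Real.exp (-((2:ℝ)^k)^2 * ‖x - y‖^2) ≤ ∏ i, hwt (dcode d k y i - dcode d k x i) := by
  rw [EuclideanSpace.norm_sq_eq, Finset.mul_sum, Real.exp_sum]
  apply Finset.prod_le_prod
  · intro i _
    positivity
  · intro i _
    refine le_trans (le_of_eq ?_) (gauss_one ((2:ℝ)^k * x i) ((2:ℝ)^k * y i))
    congr 1
    rw [Real.norm_eq_abs, sq_abs, PiLp.sub_apply]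
    ring

lemma sum_prod_hwt (d : ℕ) (T : Finset (Fin d → ℤ)) (u : Fin d → ℤ) :
    ∑ v ∈ T, ∏ i, hwt (v i - u i) ≤ (∑' m, hwt m)^d := by
  classical
  calc ∑ v ∈ T, ∏ i, hwt (v i - u i)
      ≤ ∑ v ∈ Fintype.piFinset (fun i => T.image (fun v => v i)), ∏ i, hwt (v i - u i) := by
        apply Finset.sum_le_sum_of_subset_of_nonneg
        · intro v hv
          rw [Fintype.mem_piFinset]
          exact fun i => Finset.mem_image_of_mem _ hv
        · intro v _ _
          exact Finset.prod_nonneg fun i _ => hwt_nonneg _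
    _ = ∏ i, ∑ m ∈ T.image (fun v => v i), hwt (m - u i) :=
        (Finset.prod_univ_sum (fun i => T.image (fun v => v i)) (fun i m => hwt (m - u i))).symm
    _ ≤ ∏ i : Fin d, ∑' m, hwt m := by
        apply Finset.prod_le_prod
        · intro i _
          exact Finset.sum_nonneg fun m _ => hwt_nonneg _
        · intro i _
          have e := (Equiv.subRight (u i)).tsum_eq hwt
          have hsu : Summable (fun m : ℤ => hwt (m - u i)) :=
            (Equiv.subRight (u i)).summable_iff.mpr hwt_summable
          rw [← e]
          exact hsu.sum_le_tsum _ (fun m _ => hwt_nonneg _)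
    _ = _ := by simp

lemma codes_finite (d k : ℕ) (K : Set (EuclideanSpace ℝ (Fin d))) (hK : IsCompact K) :
    (dcode d k '' K).Finite := by
  obtain ⟨R, hR⟩ := hK.isBounded.exists_norm_le
  apply (Set.finite_Icc (fun _ : Fin d => ⌊(2:ℝ)^k * (-R)⌋) (fun _ => ⌊(2:ℝ)^k * R⌋)).subset
  rintro _ ⟨x, hx, rfl⟩
  have h := fun i => abs_le.mp ((PiLp.norm_apply_le x i).trans (hR x hx))
  constructor <;> intro i <;> apply Int.floor_le_floor
  · exact mul_le_mul_of_nonneg_left (h i).1 (by positivity)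
  · exact mul_le_mul_of_nonneg_left (h i).2 (by positivity)

theorem frostman (d : ℕ) (K : Set (EuclideanSpace ℝ (Fin d))) (hK : IsCompact K) (s : NNReal)
    (hs : 0 < s) (hdim : (s : ℝ≥0∞) < dimH K) :
    ∃ μ : Measure (EuclideanSpace ℝ (Fin d)), IsFiniteMeasure μ ∧ μ ≠ 0 ∧ μ Kᶜ = 0 ∧
      ∃ C : ℝ, ∀ (k : ℕ) (x : EuclideanSpace ℝ (Fin d)),
        ∫ y, Real.exp (-((2:ℝ)^k)^2 * ‖x - y‖^2) ∂μ ≤ C * ((2:ℝ)^k)^(-(s:ℝ)) := by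
  obtain ⟨H, hH0, hH⟩ := content_pos d K s hs hdim
  haveI : CompactSpace K := isCompact_iff_compactSpace.mp hK
  set cov : (ℕ × (Fin d → ℤ) →₀ ℝ) →ₗ[ℝ] (K → ℝ) := LinearMap.pi (fun x : K =>
    Finsupp.linearCombination ℝ (fun q : ℕ × (Fin d → ℤ) => if dcode d q.1 x = q.2 then (1:ℝ) else 0)) with hcovd
  set cost : (ℕ × (Fin d → ℤ) →₀ ℝ) →ₗ[ℝ] ℝ :=
    Finsupp.linearCombination ℝ (fun q : ℕ × (Fin d → ℤ) => ((2:ℝ)^q.1) ^ (-(s:ℝ))) with hcostd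
  have hcost : ∀ w, 0 ≤ w → 0 ≤ cost w := by
    intro w hw
    rw [hcostd, Finsupp.linearCombination_apply]
    exact Finset.sum_nonneg fun q _ => mul_nonneg (hw q) (by positivity)
  have hcov : ∀ w, 0 ≤ w → ∀ x, 0 ≤ cov w x := by
    intro w hw x
    rw [hcovd, LinearMap.pi_apply, Finsupp.linearCombination_apply]
    exact Finset.sum_nonneg fun q _ => mul_nonneg (hw q) (by split_ifs <;> norm_num)
  have hmk : ∀ (k : ℕ) (T : Finset (Fin d → ℤ)) (W : (Fin d → ℤ) → ℝ), (∀ v, 0 ≤ W v) →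
      ∃ w, 0 ≤ w ∧ cost w = (∑ v ∈ T, W v) * ((2:ℝ)^k) ^ (-(s:ℝ)) ∧
        ∀ x : K, dcode d k x ∈ T → cov w x = W (dcode d k x) := by
    intro k T W hW
    refine ⟨∑ v ∈ T, Finsupp.single (k, v) (W v),
      Finset.sum_nonneg fun v _ => Finsupp.single_nonneg.mpr (hW v), ?_, ?_⟩
    · rw [map_sum, Finset.sum_mul]
      exact Finset.sum_congr rfl fun v _ => by rw [hcostd, Finsupp.linearCombination_single, smul_eq_mul]
    · intro x hx
      rw [map_sum, Finset.sum_apply]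
      have : ∀ v ∈ T, cov (Finsupp.single (k, v) (W v)) x = if dcode d k x = v then W v else 0 := by
        intro v _
        rw [hcovd, LinearMap.pi_apply, Finsupp.linearCombination_single, smul_eq_mul, mul_ite,
          mul_one, mul_zero]
      rw [Finset.sum_congr rfl this, Finset.sum_ite_eq, if_pos hx]
  have hmem : ∀ k (x : K), dcode d k x ∈ (codes_finite d k K hK).toFinset := fun k x => by
    rw [Set.Finite.mem_toFinset]; exact ⟨x, x.2, rfl⟩
  have hbig : ∃ w0, 0 ≤ w0 ∧ ∀ x, 1 ≤ cov w0 x := by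
    obtain ⟨w, hw, -, h⟩ := hmk 0 (codes_finite d 0 K hK).toFinset (fun _ => 1) (fun _ => zero_le_one)
    exact ⟨w, hw, fun x => (h x (hmem 0 x)).ge⟩
  have hHH : ∀ (t : ℝ) (w : ℕ × (Fin d → ℤ) →₀ ℝ), 0 ≤ w → (∀ x, t ≤ cov w x) → t * H ≤ cost w := by
    intro t w hw ht
    have := weighted_cover (dcode d) (fun k => ((2:ℝ)^k) ^ (-(s:ℝ))) (fun k => by positivity)
      (dcode_ref d) K H hH0.le hH _ w.support w t rfl (fun q _ => hw q) (by
        intro x hx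
        have := ht ⟨x, hx⟩
        rw [hcovd, LinearMap.pi_apply, Finsupp.linearCombination_apply, Finsupp.sum] at this
        simp only [smul_eq_mul, mul_ite, mul_one, mul_zero] at this
        convert this)
    rw [hcostd, Finsupp.linearCombination_apply]
    exact this
  obtain ⟨μ, hμf, hμ0, hμ⟩ := frostman_functional cov cost hcost hbig hcov H hH0 hHH
  have hemb : MeasurableEmbedding (Subtype.val : K → EuclideanSpace ℝ (Fin d)) :=
    MeasurableEmbedding.subtype_coe hK.measurableSet
  refine ⟨μ.map Subtype.val, inferInstance, ?_, ?_, (∑' m, hwt m)^d, ?_⟩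
  · rwa [Ne, Measure.map_eq_zero_iff measurable_subtype_coe.aemeasurable]
  · rw [Measure.map_apply measurable_subtype_coe hK.measurableSet.compl]
    simp
  · intro k x
    rw [hemb.integral_map]
    obtain ⟨w, hw, hwc, hwv⟩ := hmk k (codes_finite d k K hK).toFinset
      (fun v => ∏ i, hwt (v i - dcode d k x i)) (fun v => Finset.prod_nonneg fun i _ => hwt_nonneg _)
    have h1 := hμ ⟨fun y : K => Real.exp (-((2:ℝ)^k)^2 * ‖x - (y : EuclideanSpace ℝ (Fin d))‖^2), by fun_prop⟩ w hw (by
      intro y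
      rw [hwv y (hmem k y)]
      exact gauss_le d k x y)
    refine h1.trans ?_
    rw [hwc]
    exact mul_le_mul_of_nonneg_right (sum_prod_hwt d _ _) (by positivity)

end Frostman

section Assembly
open MeasureTheory

/-- splitting off the last coordinate -/
noncomputable def splitLast (n : ℕ) (x : EuclideanSpace ℝ (Fin (n+1))) :
    EuclideanSpace ℝ (Fin n) × ℝ :=
  (WithLp.toLp 2 (fun i => x i.castSucc), x (Fin.last n))

lemma splitLast_cont (n : ℕ) : Continuous (splitLast n) := by
  unfold splitLast
  fun_prop

lemma splitLast_surj (n : ℕ) (z : EuclideanSpace ℝ (Fin n) × ℝ) : ∃ x, splitLast n x = z := by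
  refine ⟨WithLp.toLp 2 (Fin.snoc (α := fun _ => ℝ) (fun i => z.1 i) z.2), ?_⟩
  unfold splitLast
  ext <;> simp

lemma splitLast_norm (n : ℕ) (x y : EuclideanSpace ℝ (Fin (n+1))) :
    ‖x - y‖^2 = ‖(splitLast n x).1 - (splitLast n y).1‖^2 + ((splitLast n x).2 - (splitLast n y).2)^2 := by
  rw [EuclideanSpace.norm_sq_eq, EuclideanSpace.norm_sq_eq, Fin.sum_univ_castSucc]
  simp [splitLast]

lemma splitLast_parab (n : ℕ) (x y : EuclideanSpace ℝ (Fin (n+1))) :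
    parab (n+1) (x - y) = ‖(splitLast n x).1 - (splitLast n y).1‖^2
      + ((splitLast n x).2 - (splitLast n y).2) := by
  unfold parab
  rw [EuclideanSpace.norm_sq_eq, Fin.sum_univ_castSucc]
  simp [splitLast]

lemma frostman_split (n : ℕ) (K : Set (EuclideanSpace ℝ (Fin (n+1)))) (hK : IsCompact K) (s : NNReal)
    (hs : 0 < s) (hdim : (s : ℝ≥0∞) < dimH K) :
    ∃ m : Measure (EuclideanSpace ℝ (Fin n) × ℝ), IsFiniteMeasure m ∧ m ≠ 0 ∧
      m (splitLast n '' K)ᶜ = 0 ∧ GFrost m (s:ℝ) := by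
  obtain ⟨μ, hf, h0, hKc, C, hC⟩ := frostman (n+1) K hK s hs hdim
  have hT := splitLast_cont n
  refine ⟨μ.map (splitLast n), inferInstance, ?_, ?_, C, ?_⟩
  · rwa [Ne, Measure.map_eq_zero_iff hT.measurable.aemeasurable]
  · rw [Measure.map_apply hT.measurable (hK.image hT).measurableSet.compl]
    refine measure_mono_null ?_ hKc
    intro x hx hxK
    exact hx ⟨x, hxK, rfl⟩
  · intro k z
    obtain ⟨x, rfl⟩ := splitLast_surj n z
    rw [integral_map hT.measurable.aemeasurable
      (by apply Continuous.aestronglyMeasurable; fun_prop)]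
    simp only [← splitLast_norm]
    exact hC k x

end Assembly

theorem parabolic_distance_interior (d : ℕ) (hd : 2 ≤ d)
    (E F : Set (EuclideanSpace ℝ (Fin d))) (hE : IsCompact E) (hF : IsCompact F)
    (hdimE : dimH E > ((d : ℝ≥0∞) + 1) / 2) (hdimF : dimH F > ((d : ℝ≥0∞) + 1) / 2) :
    (interior {t : ℝ | ∃ x ∈ E, ∃ y ∈ F, parab d (x - y) = t}).Nonempty := by
  obtain ⟨n, rfl⟩ : ∃ n, d = n + 1 := ⟨d - 1, by omega⟩
  obtain ⟨s, hs1, hs2⟩ := ENNReal.lt_iff_exists_nnreal_btwn.mp (lt_min hdimE hdimF)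
  have hsE := hs2.trans_le (min_le_left _ _)
  have hsF := hs2.trans_le (min_le_right _ _)
  have hs3 : ((n:ℝ) + 1 + 1) / 2 < s := by
    have h : ((((n:NNReal) + 1 + 1) / 2 : NNReal) : ℝ≥0∞) < s := by
      refine lt_of_eq_of_lt ?_ hs1
      rw [ENNReal.coe_div (by norm_num)]
      push_cast
      rfl
    exact_mod_cast h
  have hs0 : 0 < s := by
    have : (0:ℝ) < s := lt_of_le_of_lt (by positivity) hs3
    exact_mod_cast this
  obtain ⟨m, hmf, hm0, hmA, hmG⟩ := frostman_split n E hE s hs0 hsE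
  obtain ⟨m', hmf', hm0', hmA', hmG'⟩ := frostman_split n F hF s hs0 hsF
  have key := interior_product m m' hm0 hm0' s hmG hmG' (by rw [finrank_euclideanSpace_fin]; linarith)
    _ _ (hE.image (splitLast_cont n)) (hF.image (splitLast_cont n)) hmA hmA'
  refine key.mono (interior_mono ?_)
  rintro _ ⟨⟨_, _⟩, ⟨⟨x, hx, rfl⟩, ⟨y, hy, rfl⟩⟩, rfl⟩
  exact ⟨x, hx, y, hy, splitLast_parab n x y⟩
end

section
/- Let $A \subset \mathbb{R}$ be a compact set with $\dim_H(A) \ge \frac{5}{8}$ and let $d \ge 5$ be an integer. Then the distance set $\Delta(A^d)$ has non-empty interior. -/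
open ENNReal

/-- The distance set `Δ(E) = {|x - y| : x, y ∈ E}` of a set `E ⊆ ℝⁿ`. -/
def distSet {n : ℕ} (E : Set (EuclideanSpace ℝ (Fin n))) : Set ℝ :=
  {t : ℝ | ∃ x ∈ E, ∃ y ∈ E, dist x y = t}

/-- The `n`-fold Cartesian product `Aⁿ ⊆ ℝⁿ` of a set `A ⊆ ℝ`. -/
def prodSet (A : Set ℝ) (n : ℕ) : Set (EuclideanSpace ℝ (Fin n)) :=
  {x | ∀ i, x i ∈ A}

open MeasureTheory Set Filter Topology

theorem ms_frostman (A : Set ℝ) (hA : IsCompact A) (s : ℝ) (hs : 0 < s)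
    (h : Measure.hausdorffMeasure s A ≠ 0) :
    ∃ μ : Measure ℝ, IsFiniteMeasure μ ∧ μ ≠ 0 ∧ μ Aᶜ = 0 ∧
      ∃ C : ℝ, 0 ≤ C ∧ ∀ x ρ : ℝ, 0 < ρ → μ.real (Icc (x - ρ) (x + ρ)) ≤ C * ρ ^ s := by
  set m : Set ℝ → ℝ≥0∞ := fun t => (Metric.ediam t) ^ s with hm
  have h1 : Measure.hausdorffMeasure s A = OuterMeasure.mkMetric' m A := by
    rw [Measure.hausdorffMeasure, ← Measure.coe_toOuterMeasure,
      Measure.mkMetric_toOuterMeasure]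
    rfl
  rw [h1, OuterMeasure.mkMetric', OuterMeasure.iSup_apply] at h
  simp only [ne_eq, ENNReal.iSup_eq_zero, not_forall, OuterMeasure.iSup_apply] at h
  obtain ⟨r, hr, hPr⟩ := h
  obtain ⟨ε, hε, hεr⟩ : ∃ ε : ℝ, 0 < ε ∧ ENNReal.ofReal ε ≤ r := by
    rcases eq_or_ne r ⊤ with h | h
    · exact ⟨1, one_pos, by simp [h]⟩
    · exact ⟨r.toReal, ENNReal.toReal_pos hr.ne' h, by simp [h]⟩
  set P := OuterMeasure.mkMetric'.pre m r with hP
  have hI : ∀ x y : ℝ, x ≤ y → y - x ≤ ε → P (Icc x y) ≤ ENNReal.ofReal ((y - x) ^ s) := by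
    intro x y hxy hy
    have : Metric.ediam (Icc x y) = ENNReal.ofReal (y - x) := Real.ediam_Icc x y
    refine (OuterMeasure.mkMetric'.pre_le ?_).trans ?_
    · rw [this]; exact (ENNReal.ofReal_le_ofReal hy).trans hεr
    · simp only [hm, this]
      rw [ENNReal.ofReal_rpow_of_nonneg (by linarith) hs.le]
  have hfin : P A < ⊤ := by
    refine hA.induction_on (p := fun S => P S < ⊤) (by simp) ?_ ?_ ?_
    · intro S T hST hT; exact (measure_mono hST).trans_lt hT
    · intro S T hS hT
      exact (measure_union_le S T).trans_lt (ENNReal.add_lt_top.2 ⟨hS, hT⟩)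
    · intro x _
      refine ⟨Icc (x - ε/2) (x + ε/2), mem_nhdsWithin_of_mem_nhds (Icc_mem_nhds (by linarith) (by linarith)), ?_⟩
      exact (hI _ _ (by linarith) (by linarith)).trans_lt ENNReal.ofReal_lt_top
  have hfin' : ∀ x, P (A ∩ Iic x) ≠ ⊤ := fun x =>
    ((measure_mono inter_subset_left).trans_lt hfin).ne
  set M : ℝ → ℝ := fun x => (P (A ∩ Iic x)).toReal with hM
  have hmono : Monotone M := by
    intro x y hxy
    refine ENNReal.toReal_mono (hfin' y) (measure_mono ?_)
    exact inter_subset_inter_right _ (Iic_subset_Iic.2 hxy)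
  have hinc : ∀ x y, x ≤ y → y - x ≤ ε → M y - M x ≤ (y - x) ^ s := by
    intro x y hxy hy
    have h2 : P (A ∩ Iic y) ≤ P (A ∩ Iic x) + ENNReal.ofReal ((y - x) ^ s) := by
      refine le_trans (measure_mono (t := (A ∩ Iic x) ∪ Icc x y) ?_) ((measure_union_le _ _).trans ?_)
      · rintro z ⟨hz, hz'⟩
        rcases le_total z x with h | h
        · exact Or.inl ⟨hz, h⟩
        · exact Or.inr ⟨h, hz'⟩
      · gcongr; exact hI x y hxy hy
    have h3 := ENNReal.toReal_mono (ENNReal.add_ne_top.2 ⟨hfin' x, ENNReal.ofReal_ne_top⟩) h2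
    rw [ENNReal.toReal_add (hfin' x) (by finiteness), ENNReal.toReal_ofReal (Real.rpow_nonneg (by linarith) _)] at h3
    simp only [hM]; linarith
  have hcont : ∀ x, ContinuousWithinAt M (Ici x) x := by
    intro x
    have ht : Tendsto (fun y => M x + (y - x) ^ s) (𝓝[Ici x] x) (𝓝 (M x)) := by
      have : ContinuousAt (fun y => M x + (y - x) ^ s) x := by
        refine continuousAt_const.add ?_
        exact (continuousAt_id.sub continuousAt_const).rpow_const (Or.inr hs.le)
      have h2 := this.tendsto
      simp only [sub_self, Real.zero_rpow hs.ne', add_zero] at h2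
      exact h2.mono_left nhdsWithin_le_nhds
    refine tendsto_of_tendsto_of_tendsto_of_le_of_le' tendsto_const_nhds ht ?_ ?_
    · filter_upwards [self_mem_nhdsWithin] with y hy using hmono hy
    · filter_upwards [self_mem_nhdsWithin, mem_nhdsWithin_of_mem_nhds (Iic_mem_nhds (show x < x + ε by linarith))] with y hy hy2
      have := hinc x y hy (by simp at hy2; linarith)
      linarith
  let f : StieltjesFunction ℝ := ⟨M, hmono, hcont⟩
  have hf : ∀ x y, f.measure (Ioc x y) = ENNReal.ofReal (M y - M x) := fun x y => f.measure_Ioc x y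
  obtain ⟨L, hL⟩ := hA.isBounded.subset_closedBall 0
  rw [Real.closedBall_eq_Icc] at hL
  have hAc : f.measure Aᶜ = 0 := by
    refine measure_null_of_locally_null _ fun x hx => ?_
    obtain ⟨δ, hδ, hb⟩ := Metric.isOpen_iff.1 hA.isClosed.isOpen_compl x hx
    refine ⟨Ioc (x - δ/2) (x + δ/2), mem_nhdsWithin_of_mem_nhds (Ioc_mem_nhds (by linarith) (by linarith)), ?_⟩
    rw [hf]
    have : A ∩ Iic (x + δ/2) = A ∩ Iic (x - δ/2) := by
      ext z
      simp only [mem_inter_iff, mem_Iic]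
      refine ⟨fun ⟨h1, h2⟩ => ⟨h1, ?_⟩, fun ⟨h1, h2⟩ => ⟨h1, by linarith⟩⟩
      by_contra h3
      push Not at h3
      refine hb (a := z) ?_ h1
      rw [Metric.mem_ball, Real.dist_eq, abs_lt]
      constructor <;> linarith
    simp [hM, this]
  have hsub : A ⊆ Ioc (0 - L - 1) (0 + L) := fun z hz => ⟨by linarith [(hL hz).1], (hL hz).2⟩
  have hfinite : IsFiniteMeasure f.measure := by
    constructor
    rw [← union_compl_self A]
    refine (measure_union_le _ _).trans_lt ?_
    rw [hAc, add_zero]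
    refine (measure_mono hsub).trans_lt ?_
    rw [hf]; exact ENNReal.ofReal_lt_top
  refine ⟨f.measure, hfinite, ?_, hAc, 3 ^ s + f.measure.real univ * (3 / ε) ^ s, by positivity, ?_⟩
  · intro h0
    have h2 := hf (0 - L - 1) (0 + L)
    rw [h0] at h2
    have e1 : A ∩ Iic (0 + L) = A := inter_eq_left.2 fun z hz => (hL hz).2
    have e2 : A ∩ Iic (0 - L - 1) = ∅ := by
      ext z; simp only [mem_inter_iff, mem_Iic, mem_empty_iff_false, iff_false, not_and, not_le]
      intro hz; linarith [(hL hz).1]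
    simp only [hM, e1, e2, measure_empty, Measure.coe_zero, Pi.zero_apply, ENNReal.toReal_zero, sub_zero] at h2
    rw [ENNReal.ofReal_toReal hfin.ne] at h2
    exact hPr h2.symm
  · intro x ρ hρ
    rw [add_mul]
    by_cases h3 : 3 * ρ ≤ ε
    · have : f.measure.real (Icc (x - ρ) (x + ρ)) ≤ f.measure.real (Ioc (x - 2 * ρ) (x + ρ)) :=
        measureReal_mono (fun z hz => ⟨by linarith [hz.1], hz.2⟩)
      refine this.trans ?_
      rw [measureReal_def, hf, ENNReal.toReal_ofReal (by linarith [hmono (show x - 2 * ρ ≤ x + ρ by linarith)])]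
      have h4 := hinc (x - 2 * ρ) (x + ρ) (by linarith) (by linarith)
      rw [show x + ρ - (x - 2 * ρ) = 3 * ρ by ring, Real.mul_rpow (by norm_num) hρ.le] at h4
      have : 0 ≤ f.measure.real univ * (3 / ε) ^ s * ρ ^ s := by positivity
      linarith
    · have h4 : f.measure.real (Icc (x - ρ) (x + ρ)) ≤ f.measure.real univ :=
        measureReal_mono (subset_univ _)
      have h5 : 1 ≤ (3 / ε * ρ) ^ s := by
        refine Real.one_le_rpow ?_ hs.le
        rw [div_mul_eq_mul_div, one_le_div hε]; linarith
      rw [Real.mul_rpow (by positivity) hρ.le] at h5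
      have h6 : f.measure.real univ * 1 ≤ f.measure.real univ * ((3 / ε) ^ s * ρ ^ s) := by gcongr
      have : 0 ≤ (3:ℝ) ^ s * ρ ^ s := by positivity
      linarith

theorem ms_gauss_cos (δ u : ℝ) (hδ : 0 < δ) :
    ∫ η : ℝ, Real.exp (-δ * η ^ 2) * Real.cos (η * u)
      = Real.sqrt (Real.pi / δ) * Real.exp (-u ^ 2 / (4 * δ)) := by
  have h := fourierIntegral_gaussian (b := (δ : ℂ)) (by simpa using hδ) (u : ℂ)
  have hi : Integrable (fun x : ℝ => Complex.exp (Complex.I * u * x) * Complex.exp (-(δ:ℂ) * x ^ 2)) := by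
    have := integrable_cexp_quadratic (b := (δ : ℂ)) (by simpa using hδ) (Complex.I * u) 0
    refine this.congr (Eventually.of_forall fun x => ?_)
    simp only [add_zero, ← Complex.exp_add]
    ring_nf
  have h2 := congrArg Complex.re h
  have e : (∫ x : ℝ, Complex.exp (Complex.I * u * x) * Complex.exp (-(δ:ℂ) * x ^ 2)).re =
      ∫ x : ℝ, (Complex.exp (Complex.I * u * x) * Complex.exp (-(δ:ℂ) * x ^ 2)).re :=
    (integral_re hi).symm
  rw [e] at h2
  calc _ = ∫ x : ℝ, (Complex.exp (Complex.I * u * x) * Complex.exp (-(δ:ℂ) * x ^ 2)).re := by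
        congr 1; ext x
        have e1 : Complex.exp (-(δ:ℂ) * x ^ 2) = ((Real.exp (-δ * x ^ 2) : ℝ) : ℂ) := by
          push_cast; rfl
        have e2 : Complex.I * u * x = ((x * u : ℝ) : ℂ) * Complex.I := by push_cast; ring
        rw [e1, e2, Complex.re_mul_ofReal, Complex.exp_ofReal_mul_I_re, mul_comm]
    _ = _ := by
        rw [h2]
        have e1 : Complex.exp (-(u:ℂ) ^ 2 / (4 * δ)) = ((Real.exp (-u ^ 2 / (4 * δ)) : ℝ) : ℂ) := by
          push_cast; rfl
        have e3 : ((Real.pi : ℂ) / δ) ^ (1 / 2 : ℂ) = ((Real.sqrt (Real.pi / δ) : ℝ) : ℂ) := by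
          rw [Real.sqrt_eq_rpow, Complex.ofReal_cpow (by positivity)]
          push_cast; rfl
        rw [e1, e3, ← Complex.ofReal_mul, Complex.ofReal_re]

theorem ms_int_poly_gauss (z : ℝ) (hz : 0 < z) (n : ℕ) (g : ℝ → ℝ) (hg : Continuous g)
    (hb : ∀ x, |g x| ≤ 1) : Integrable fun r : ℝ => r ^ n * g r * Real.exp (-z * r ^ 2) := by
  have h := integrable_rpow_mul_exp_neg_mul_sq hz (s := (n : ℝ)) (by have : (0:ℝ) ≤ n := by positivity
                                                                     linarith)
  simp only [Real.rpow_natCast] at h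
  refine h.mono (by fun_prop) (Eventually.of_forall fun x => ?_)
  simp only [norm_mul, Real.norm_eq_abs]
  have := hb x
  calc _ ≤ |x ^ n| * 1 * |Real.exp (-z * x ^ 2)| := by gcongr
    _ = _ := by ring

noncomputable def msS (b r : ℝ) : ℝ := r * (Real.sin (b * r) - b * r * Real.cos (b * r)) / b ^ 3

theorem ms_sin_bound (x : ℝ) : |Real.sin x - x * Real.cos x| ≤ 2 * |x| ^ 3 := by
  wlog hx : 0 ≤ x with H
  · have := H (-x) (by linarith)
    rw [Real.sin_neg, Real.cos_neg, abs_neg] at this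
    rw [← abs_neg]
    convert this using 2
    ring
  rw [abs_of_nonneg hx, abs_le]
  rcases hx.eq_or_lt with rfl | hx
  · simp
  have h3 : 0 < x ^ 3 := by positivity
  constructor
  · rcases le_or_gt x 1 with h | h
    · have := Real.sin_gt_sub_cube hx
      nlinarith [Real.cos_le_one x]
    · have h5 := Real.neg_one_le_sin x
      have h6 := Real.cos_le_one x
      have : x ≤ x ^ 3 := by nlinarith [mul_pos hx hx]
      nlinarith
  · have h5 := Real.sin_le hx.le
    have h6 := Real.one_sub_sq_div_two_le_cos (x := x)
    nlinarith

theorem ms_S_bound (b r : ℝ) : |msS b r| ≤ (2 * r ^ 4 + 2 * r ^ 2) / (1 + b ^ 2) := by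
  rcases eq_or_ne b 0 with rfl | hb
  · simp [msS]; positivity
  have hb' : 0 < |b| := abs_pos.2 hb
  rw [le_div_iff₀ (by positivity), msS, abs_div, abs_mul, abs_pow, div_mul_eq_mul_div, div_le_iff₀ (by positivity)]
  have h1 := ms_sin_bound (b * r)
  have h2 : |Real.sin (b * r) - b * r * Real.cos (b * r)| ≤ 2 * |b * r| := by
    have h3 := Real.abs_sin_le_abs (x := b * r)
    have h4 : |b * r * Real.cos (b * r)| ≤ |b * r| := by
      rw [abs_mul]; exact mul_le_of_le_one_right (abs_nonneg _) (Real.abs_cos_le_one _)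
    linarith [abs_sub (Real.sin (b * r)) (b * r * Real.cos (b * r))]
  rw [abs_mul] at h1 h2
  set X := |Real.sin (b * r) - b * r * Real.cos (b * r)|
  have e1 : r ^ 4 = |r| ^ 4 := by rw [← abs_pow, abs_of_nonneg (by positivity)]
  rw [e1, ← sq_abs r, ← sq_abs b]
  calc |r| * X * (1 + |b| ^ 2) = |r| * X + |r| * |b|^2 * X := by ring
    _ ≤ |r| * (2 * (|b| * |r|) ^ 3) + |r| * |b|^2 * (2 * (|b| * |r|)) := by gcongr
    _ = _ := by ring

theorem ms_S_integral (b z : ℝ) (hb : b ≠ 0) (hz : 0 < z) :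
    ∫ r : ℝ, Real.exp (-z * r ^ 2) * msS b r =
      Real.sqrt (Real.pi / z) / (4 * z ^ 2) * Real.exp (-b ^ 2 / (4 * z)) := by
  have h0 := ms_gauss_cos z b hz
  have i0 : Integrable fun r : ℝ => Real.exp (-z * r ^ 2) * Real.cos (r * b) := by
    refine (ms_int_poly_gauss z hz 0 (fun r => Real.cos (r * b)) (by fun_prop) fun x => Real.abs_cos_le_one _).congr
      (Eventually.of_forall fun x => ?_)
    simp only []; ring
  have i1 : Integrable fun r : ℝ => r * Real.sin (b * r) * Real.exp (-z * r ^ 2) := by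
    refine (ms_int_poly_gauss z hz 1 (fun r => Real.sin (b * r)) (by fun_prop) fun x => Real.abs_sin_le_one _).congr
      (Eventually.of_forall fun x => ?_)
    simp only []; ring
  have i2 : Integrable fun r : ℝ => r ^ 2 * Real.cos (b * r) * Real.exp (-z * r ^ 2) := 
    (ms_int_poly_gauss z hz 2 (fun r => Real.cos (b * r)) (by fun_prop) fun x => Real.abs_cos_le_one _)
  have i1' : Integrable fun r : ℝ => r * Real.cos (b * r) * Real.exp (-z * r ^ 2) := by
    refine (ms_int_poly_gauss z hz 1 (fun r => Real.cos (b * r)) (by fun_prop) fun x => Real.abs_cos_le_one _).congr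
      (Eventually.of_forall fun x => ?_)
    simp only []; ring
  have i0' : Integrable fun r : ℝ => Real.sin (b * r) * Real.exp (-z * r ^ 2) := by
    refine (ms_int_poly_gauss z hz 0 (fun r => Real.sin (b * r)) (by fun_prop) fun x => Real.abs_sin_le_one _).congr
      (Eventually.of_forall fun x => ?_)
    simp only []; ring
  have hE : ∀ r : ℝ, HasDerivAt (fun r : ℝ => Real.exp (-z * r ^ 2)) (Real.exp (-z * r ^ 2) * (-z * (2 * r))) r := by
    intro r
    have := ((hasDerivAt_pow 2 r).const_mul (-z)).exp
    simpa using this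
  have hs : ∀ r : ℝ, HasDerivAt (fun r : ℝ => Real.sin (b * r)) (Real.cos (b * r) * b) r := by
    intro r
    have := ((hasDerivAt_id r).const_mul b).sin
    simpa using this
  have hc : ∀ r : ℝ, HasDerivAt (fun r : ℝ => Real.cos (b * r)) (-Real.sin (b * r) * b) r := by
    intro r
    have := ((hasDerivAt_id r).const_mul b).cos
    simpa using this
  set I0 := ∫ η : ℝ, Real.exp (-z * η ^ 2) * Real.cos (η * b) with hI0
  set I1 := ∫ r : ℝ, r * Real.sin (b * r) * Real.exp (-z * r ^ 2) with hI1
  set I2 := ∫ r : ℝ, r ^ 2 * Real.cos (b * r) * Real.exp (-z * r ^ 2) with hI2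
  have k1 : b * I0 - 2 * z * I1 = 0 := by
    have e : b * I0 - 2 * z * I1 = ∫ r : ℝ, (b * (Real.exp (-z * r ^ 2) * Real.cos (r * b)) -
        2 * z * (r * Real.sin (b * r) * Real.exp (-z * r ^ 2))) := by
      rw [integral_sub (i0.const_mul _) (i1.const_mul _), integral_const_mul, integral_const_mul]
    rw [e]
    refine integral_eq_zero_of_hasDerivAt_of_integrable (f := fun r : ℝ => Real.sin (b * r) * Real.exp (-z * r ^ 2))
      (fun r => ?_) ((i0.const_mul _).sub (i1.const_mul _)) i0'
    refine ((hs r).mul (hE r)).congr_deriv ?_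
    rw [mul_comm r b]; ring
  have k2 : I0 - b * I1 - 2 * z * I2 = 0 := by
    have e : I0 - b * I1 - 2 * z * I2 = ∫ r : ℝ, ((Real.exp (-z * r ^ 2) * Real.cos (r * b)) -
        b * (r * Real.sin (b * r) * Real.exp (-z * r ^ 2)) - 2 * z * (r ^ 2 * Real.cos (b * r) * Real.exp (-z * r ^ 2))) := by
      rw [integral_sub (f := fun r : ℝ => Real.exp (-z * r ^ 2) * Real.cos (r * b) -
        b * (r * Real.sin (b * r) * Real.exp (-z * r ^ 2))) (i0.sub (i1.const_mul _)) (i2.const_mul _), integral_sub i0 (i1.const_mul _), integral_const_mul, integral_const_mul]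
    rw [e]
    refine integral_eq_zero_of_hasDerivAt_of_integrable (f := fun r : ℝ => r * Real.cos (b * r) * Real.exp (-z * r ^ 2))
      (fun r => ?_) ((i0.sub (i1.const_mul _)).sub (i2.const_mul _)) i1'
    refine (((hasDerivAt_id r).mul (hc r)).mul (hE r)).congr_deriv ?_
    simp only [id, Pi.mul_apply]
    rw [mul_comm r b]; ring
  have e : ∫ r : ℝ, Real.exp (-z * r ^ 2) * msS b r = (1 / b ^ 3) * I1 - (1 / b ^ 2) * I2 := by
    rw [hI1, hI2, ← integral_const_mul, ← integral_const_mul, ← integral_sub (i1.const_mul _) (i2.const_mul _)]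
    congr 1; ext r
    simp only [msS]; field_simp
  have k1' : I1 = b * I0 / (2 * z) := by field_simp; linarith
  have k2' : I2 = (I0 - b * I1) / (2 * z) := by field_simp; linarith
  rw [e, k2', k1', h0]
  field_simp
  ring

noncomputable def msw (μ : Measure ℝ) (η : ℝ) : ℝ := ∫ p, Real.cos (η * (p.1 - p.2)) ∂(μ.prod μ)

noncomputable def msG (μ : Measure ℝ) (z : ℝ) : ℝ :=
  ∫ p, Real.exp (-z * (p.1 - p.2) ^ 2) ∂(μ.prod μ)

set_option linter.unusedSectionVars false
set_option linter.unusedVariables false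

section
variable (μ : Measure ℝ) [IsFiniteMeasure μ]

theorem msw_cont : Continuous (msw μ) := by
  refine continuous_of_dominated (bound := fun _ => 1) (fun η => by fun_prop) (fun η => ?_) (integrable_const _) ?_
  · exact Eventually.of_forall fun p => by simpa using Real.abs_cos_le_one _
  · exact Eventually.of_forall fun p => by fun_prop

theorem msw_nonneg (η : ℝ) : 0 ≤ msw μ η := by
  have hc : Integrable (fun x => Real.cos (η * x)) μ :=
    Integrable.of_bound (by fun_prop) 1 (Eventually.of_forall fun p => by simpa using Real.abs_cos_le_one _)
  have hs : Integrable (fun x => Real.sin (η * x)) μ :=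
    Integrable.of_bound (by fun_prop) 1 (Eventually.of_forall fun p => by simpa using Real.abs_sin_le_one _)
  have : msw μ η = (∫ x, Real.cos (η * x) ∂μ) * (∫ x, Real.cos (η * x) ∂μ)
      + (∫ x, Real.sin (η * x) ∂μ) * (∫ x, Real.sin (η * x) ∂μ) := by
    rw [← integral_prod_mul, ← integral_prod_mul, ← integral_add (hc.mul_prod hc) (hs.mul_prod hs), msw]
    congr 1; ext p
    rw [mul_sub, Real.cos_sub]
  rw [this]
  nlinarith [mul_self_nonneg (∫ x, Real.cos (η * x) ∂μ), mul_self_nonneg (∫ x, Real.sin (η * x) ∂μ)]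

theorem msw_le (η : ℝ) : |msw μ η| ≤ (μ.prod μ).real univ := by
  have := norm_integral_le_of_norm_le_const (μ := μ.prod μ) (f := fun p => Real.cos (η * (p.1 - p.2))) (C := 1)
    (Eventually.of_forall fun p => by simpa using Real.abs_cos_le_one _)
  simpa [msw] using this

theorem ms_gauss_int (δ : ℝ) (hδ : 0 < δ) : Integrable fun η : ℝ => Real.exp (-δ * η ^ 2) :=
  integrable_exp_neg_mul_sq hδ

theorem msw_int (δ : ℝ) (hδ : 0 < δ) : Integrable fun η : ℝ => Real.exp (-δ * η ^ 2) * msw μ η := by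
  refine (ms_gauss_int δ hδ).mul_bdd (c := (μ.prod μ).real univ) (msw_cont μ).aestronglyMeasurable ?_
  exact Eventually.of_forall fun x => msw_le μ x

theorem msw_integral (δ : ℝ) (hδ : 0 < δ) :
    ∫ η : ℝ, Real.exp (-δ * η ^ 2) * msw μ η = Real.sqrt (Real.pi / δ) * msG μ (1 / (4 * δ)) := by
  have hI : Integrable (Function.uncurry fun (η : ℝ) (p : ℝ × ℝ) => Real.exp (-δ * η ^ 2) * Real.cos (η * (p.1 - p.2)))
      (volume.prod (μ.prod μ)) := by
    have h1 : Integrable (fun q : ℝ × (ℝ × ℝ) => Real.exp (-δ * q.1 ^ 2) * (1 : ℝ)) (volume.prod (μ.prod μ)) :=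
      (ms_gauss_int δ hδ).mul_prod (integrable_const _)
    refine h1.mono ?_ (Eventually.of_forall fun q => ?_)
    · apply Continuous.aestronglyMeasurable
      simp only [Function.uncurry_def]; fun_prop
    · simp only [Function.uncurry_def, norm_mul, norm_one]
      gcongr; exact Real.abs_cos_le_one _
  calc ∫ η : ℝ, Real.exp (-δ * η ^ 2) * msw μ η
      = ∫ η : ℝ, ∫ p, Real.exp (-δ * η ^ 2) * Real.cos (η * (p.1 - p.2)) ∂(μ.prod μ) := by
        congr 1; ext η; rw [msw, integral_const_mul]
    _ = ∫ p : ℝ × ℝ, (∫ η : ℝ, Real.exp (-δ * η ^ 2) * Real.cos (η * (p.1 - p.2))) ∂(μ.prod μ) :=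
        integral_integral_swap hI
    _ = _ := by
        rw [msG, ← integral_const_mul]
        congr 1; ext p
        rw [ms_gauss_cos _ _ hδ]
        congr 2; field_simp

theorem msG_nonneg (z : ℝ) : 0 ≤ msG μ z := integral_nonneg fun p => (Real.exp_pos _).le

theorem msG_int (z : ℝ) (hz : 0 ≤ z) : Integrable (fun p : ℝ × ℝ => Real.exp (-z * (p.1 - p.2) ^ 2)) (μ.prod μ) := by
  refine Integrable.of_bound (by fun_prop) 1 (Eventually.of_forall fun p => ?_)
  rw [Real.norm_eq_abs, Real.abs_exp, Real.exp_le_one_iff]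
  nlinarith [sq_nonneg (p.1 - p.2)]

theorem msG_bound (C : ℝ) (hC0 : 0 ≤ C)
    (hC : ∀ x ρ : ℝ, 0 < ρ → μ.real (Icc (x - ρ) (x + ρ)) ≤ C * ρ ^ (31 / 50 : ℝ)) :
    ∃ K : ℝ, 0 ≤ K ∧ ∀ δ : ℝ, 0 < δ → δ ≤ 1 → msG μ (1 / (4 * δ)) ≤ K * δ ^ (3038 / 10000 : ℝ) := by
  set m := μ.real univ with hm
  set F : ℝ := (Nat.factorial 16 : ℝ) * 4 ^ 16 with hF
  have hF0 : 0 ≤ F := by positivity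
  refine ⟨m * (C + F * m), by positivity, fun δ hδ hδ1 => ?_⟩
  set ρ := δ ^ (49 / 100 : ℝ) with hρ
  have hρ0 : 0 < ρ := by positivity
  set κ := Real.exp (-(1 / (4 * δ)) * ρ ^ 2) with hκ
  have hκb : κ ≤ F * δ ^ (3038 / 10000 : ℝ) := by
    have e1 : ρ ^ 2 = δ ^ (98 / 100 : ℝ) := by
      rw [hρ, ← Real.rpow_natCast, ← Real.rpow_mul hδ.le]; norm_num
    have e2 : 1 / (4 * δ) * ρ ^ 2 = δ ^ (-(2/100) : ℝ) / 4 := by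
      rw [e1, show (-(2/100) : ℝ) = 98/100 - 1 by norm_num, Real.rpow_sub hδ, Real.rpow_one]
      field_simp
    have h1 := Real.pow_div_factorial_le_exp (x := δ ^ (-(2/100) : ℝ) / 4) (by positivity) 16
    have e3 : (δ ^ (-(2/100) : ℝ) / 4) ^ 16 = δ ^ (-(32/100) : ℝ) / 4 ^ 16 := by
      rw [div_pow, ← Real.rpow_natCast (δ ^ _), ← Real.rpow_mul hδ.le]; norm_num
    have h2 : δ ^ (32/100 : ℝ) ≤ δ ^ (3038/10000 : ℝ) :=
      Real.rpow_le_rpow_of_exponent_ge hδ hδ1 (by norm_num)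
    rw [e3] at h1
    have h3 : κ = (Real.exp (δ ^ (-(2/100) : ℝ) / 4))⁻¹ := by
      rw [hκ, neg_mul, e2, Real.exp_neg]
    rw [h3]
    calc _ ≤ (δ ^ (-(32/100) : ℝ) / 4 ^ 16 / (Nat.factorial 16 : ℝ))⁻¹ := by gcongr
      _ = F * δ ^ (32/100 : ℝ) := by
        rw [Real.rpow_neg hδ.le, hF]
        field_simp
      _ ≤ _ := by gcongr
  have hρs : ρ ^ (31/50 : ℝ) = δ ^ (3038/10000 : ℝ) := by
    rw [hρ, ← Real.rpow_mul hδ.le]; norm_num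
  have hx : ∀ x : ℝ, ∫ y, Real.exp (-(1 / (4 * δ)) * (x - y) ^ 2) ∂μ ≤ (C + F * m) * δ ^ (3038 / 10000 : ℝ) := by
    intro x
    have i1 : Integrable ((Icc (x - ρ) (x + ρ)).indicator (fun _ : ℝ => (1:ℝ))) μ :=
      (integrable_const _).indicator measurableSet_Icc
    calc _ ≤ ∫ y, ((Icc (x - ρ) (x + ρ)).indicator (fun _ : ℝ => (1:ℝ)) y + κ) ∂μ := by
          refine integral_mono_of_nonneg (Eventually.of_forall fun y => (Real.exp_pos _).le) (i1.add (integrable_const _)) (Eventually.of_forall fun y => ?_)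
          simp only []
          have hd : 0 < 1 / (4 * δ) := by positivity
          by_cases hy : y ∈ Icc (x - ρ) (x + ρ)
          · rw [indicator_of_mem hy]
            have : Real.exp (-(1 / (4 * δ)) * (x - y) ^ 2) ≤ 1 := by
              rw [Real.exp_le_one_iff]; nlinarith [sq_nonneg (x - y)]
            have := Real.exp_pos (-(1 / (4 * δ)) * ρ ^ 2)
            linarith
          · rw [indicator_of_notMem hy, zero_add, hκ]
            have h4 : ρ ^ 2 ≤ (x - y) ^ 2 := by
              rw [mem_Icc, not_and_or] at hy
              rcases hy with hy | hy <;> nlinarith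
            rw [Real.exp_le_exp]
            nlinarith
      _ = μ.real (Icc (x - ρ) (x + ρ)) + κ * m := by
          rw [integral_add i1 (integrable_const _), integral_indicator measurableSet_Icc]
          simp [hm, mul_comm]
      _ ≤ C * ρ ^ (31 / 50 : ℝ) + (F * δ ^ (3038 / 10000 : ℝ)) * m := by
          gcongr; exact hC x ρ hρ0
      _ = _ := by rw [hρs]; ring
  rw [msG, integral_prod _ (msG_int μ _ (by positivity))]
  calc _ ≤ ∫ x, (C + F * m) * δ ^ (3038 / 10000 : ℝ) ∂μ := 
        integral_mono_of_nonneg (Eventually.of_forall fun y => integral_nonneg fun _ => (Real.exp_pos _).le) (integrable_const _) (Eventually.of_forall hx)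
    _ = _ := by simp [hm]; ring

noncomputable def msW (η : Fin 5 → ℝ) : ℝ := ∏ i, msw μ (η i)

noncomputable def msN (η : Fin 5 → ℝ) : ℝ := ∑ i, (η i) ^ 2

theorem msW_nonneg (η : Fin 5 → ℝ) : 0 ≤ msW μ η := Finset.prod_nonneg fun i _ => msw_nonneg μ _

theorem msW_cont : Continuous (msW μ) := by
  have := msw_cont μ
  unfold msW; fun_prop


theorem msN_cont : Continuous msN := by unfold msN; fun_prop

theorem msN_nonneg (η : Fin 5 → ℝ) : 0 ≤ msN η := Finset.sum_nonneg fun i _ => sq_nonneg _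

theorem msW_exp (δ : ℝ) : (fun η : Fin 5 → ℝ => Real.exp (-δ * msN η) * msW μ η) =
    fun η => ∏ i, (Real.exp (-δ * (η i) ^ 2) * msw μ (η i)) := by
  ext η
  rw [Finset.prod_mul_distrib, ← Real.exp_sum, ← Finset.mul_sum]; rfl

theorem msW_int (δ : ℝ) (hδ : 0 < δ) : Integrable fun η : Fin 5 → ℝ => Real.exp (-δ * msN η) * msW μ η := by
  rw [msW_exp]
  exact Integrable.fintype_prod (f := fun _ x => Real.exp (-δ * x ^ 2) * msw μ x) fun i => msw_int μ δ hδ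

theorem msW_integral (δ : ℝ) (hδ : 0 < δ) : ∫ η : Fin 5 → ℝ, Real.exp (-δ * msN η) * msW μ η =
    (Real.sqrt (Real.pi / δ) * msG μ (1 / (4 * δ))) ^ 5 := by
  rw [msW_exp, integral_fintype_prod_volume_eq_pow (fun x => Real.exp (-δ * x ^ 2) * msw μ x), msw_integral μ δ hδ]
  simp

theorem msW_energy (K : ℝ) (hK0 : 0 ≤ K)
    (hK : ∀ δ : ℝ, 0 < δ → δ ≤ 1 → msG μ (1 / (4 * δ)) ≤ K * δ ^ (3038 / 10000 : ℝ)) :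
    Integrable fun η : Fin 5 → ℝ => msW μ η / (1 + msN η) := by
  have hI : Integrable (fun q : ℝ × (Fin 5 → ℝ) => Real.exp (-q.1 * msN q.2) * msW μ q.2)
      ((volume.restrict (Ioc (0:ℝ) 1)).prod volume) := by
    have hW := msW_cont μ
    have hN := msN_cont
    have hc : Continuous (fun q : ℝ × (Fin 5 → ℝ) => Real.exp (-q.1 * msN q.2) * msW μ q.2) := by fun_prop
    rw [integrable_prod_iff hc.aestronglyMeasurable]
    constructor
    · filter_upwards [ae_restrict_mem measurableSet_Ioc] with δ hδ using msW_int μ δ hδ.1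
    · have h1 : IntegrableOn (fun δ : ℝ => (Real.sqrt Real.pi * K) ^ 5 * δ ^ (-(981/1000) : ℝ)) (Ioc (0:ℝ) 1) := by
        have := intervalIntegral.intervalIntegrable_rpow' (a := 0) (b := 1) (r := (-(981/1000) : ℝ)) (by norm_num)
        rw [intervalIntegrable_iff_integrableOn_Ioc_of_le zero_le_one] at this
        exact this.const_mul _
      refine Integrable.mono' h1 ?_ ?_
      · exact hc.norm.aestronglyMeasurable.integral_prod_right'
      · filter_upwards [ae_restrict_mem measurableSet_Ioc] with δ hδ
        have e1 : ∀ η : Fin 5 → ℝ, ‖Real.exp (-δ * msN η) * msW μ η‖ = Real.exp (-δ * msN η) * msW μ η := fun η => by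
          rw [Real.norm_eq_abs, abs_of_nonneg (mul_nonneg (Real.exp_pos _).le (msW_nonneg μ η))]
        simp only [e1]
        rw [msW_integral μ δ hδ.1]
        have hd := hδ.1
        have hG := msG_nonneg μ (1 / (4 * δ))
        rw [Real.norm_eq_abs, abs_of_nonneg (by positivity)]
        calc _ ≤ (Real.sqrt (Real.pi / δ) * (K * δ ^ (3038 / 10000 : ℝ))) ^ 5 := by
              gcongr; exact hK δ hδ.1 hδ.2
          _ = (Real.sqrt Real.pi * K) ^ 5 * (δ ^ (-(1962 / 10000) : ℝ)) ^ 5 := by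
              rw [← mul_pow, Real.sqrt_div Real.pi_pos.le, Real.sqrt_eq_rpow δ, 
                show (-(1962 / 10000) : ℝ) = 3038 / 10000 - 1 / 2 by norm_num, Real.rpow_sub hd]
              congr 1; field_simp
          _ = _ := by
              rw [← Real.rpow_natCast (δ ^ _), ← Real.rpow_mul hd.le]; norm_num
  have hI2 := (hI.integral_prod_right).const_mul (Real.exp 1)
  refine hI2.mono' ?_ (Eventually.of_forall fun η => ?_)
  · have hN := msN_cont
    exact ((msW_cont μ).div (by fun_prop) fun η => by have := msN_nonneg η; positivity).aestronglyMeasurable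
  · have hN := msN_nonneg η
    have hW := msW_nonneg μ η
    rw [Real.norm_eq_abs, abs_of_nonneg (by positivity)]
    simp only []
    rw [integral_mul_const]
    have hle : (1 / (1 + msN η)) * Real.exp (-1) ≤ ∫ δ in Ioc (0:ℝ) 1, Real.exp (-δ * msN η) := by
      have ic : IntegrableOn (fun δ : ℝ => Real.exp (-δ * msN η)) (Ioc (0:ℝ) 1) := by
        refine (Continuous.integrableOn_Icc (by fun_prop)).mono_set Ioc_subset_Icc_self
      have hle1 : 1 / (1 + msN η) ≤ 1 := by rw [div_le_one (by positivity)]; linarith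
      have hss : Ioc (0:ℝ) (1 / (1 + msN η)) ⊆ Ioc 0 1 := Ioc_subset_Ioc_right hle1
      calc (1 / (1 + msN η)) * Real.exp (-1) = ∫ δ in Ioc (0:ℝ) (1 / (1 + msN η)), Real.exp (-1) := by
            rw [setIntegral_const, Real.volume_real_Ioc_of_le (by positivity)]; simp
        _ ≤ ∫ δ in Ioc (0:ℝ) (1 / (1 + msN η)), Real.exp (-δ * msN η) := by
            refine setIntegral_mono_on (by simp) (ic.mono_set hss) measurableSet_Ioc fun δ hδ => ?_
            rw [Real.exp_le_exp]
            have := hδ.2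
            rw [le_div_iff₀ (by positivity)] at this
            nlinarith [hδ.1]
        _ ≤ _ := setIntegral_mono_set ic (Eventually.of_forall fun _ => (Real.exp_pos _).le) hss.eventuallyLE
    calc msW μ η / (1 + msN η) = Real.exp 1 * ((1 / (1 + msN η) * Real.exp (-1)) * msW μ η) := by
          rw [Real.exp_neg]; have := Real.exp_pos 1; field_simp
      _ ≤ _ := by gcongr
end

section
variable (μ : Measure ℝ) [IsFiniteMeasure μ]

noncomputable def msh (r : ℝ) : ℝ := ∫ η : Fin 5 → ℝ, msW μ η * msS (Real.sqrt (msN η)) r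

theorem msS_meas : Measurable (fun q : ℝ × ℝ => msS q.1 q.2) := by
  unfold msS; fun_prop

theorem msWS_meas : Measurable (fun q : ℝ × (Fin 5 → ℝ) => msW μ q.2 * msS (Real.sqrt (msN q.2)) q.1) := by
  have h1 := (msW_cont μ).measurable
  have h2 := msN_cont.measurable
  have h3 : Measurable (fun q : ℝ × (Fin 5 → ℝ) => (Real.sqrt (msN q.2), q.1)) := by fun_prop
  exact (h1.comp measurable_snd).mul (msS_meas.comp h3)

theorem msWS_bound (r : ℝ) (η : Fin 5 → ℝ) :
    |msW μ η * msS (Real.sqrt (msN η)) r| ≤ (2 * r ^ 4 + 2 * r ^ 2) * (msW μ η / (1 + msN η)) := by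
  have h := ms_S_bound (Real.sqrt (msN η)) r
  rw [Real.sq_sqrt (msN_nonneg η)] at h
  rw [abs_mul, abs_of_nonneg (msW_nonneg μ η)]
  calc _ ≤ msW μ η * ((2 * r ^ 4 + 2 * r ^ 2) / (1 + msN η)) :=
        mul_le_mul_of_nonneg_left h (msW_nonneg μ η)
    _ = _ := by ring

theorem msh_cont (hE : Integrable fun η : Fin 5 → ℝ => msW μ η / (1 + msN η)) : Continuous (msh μ) := by
  rw [continuous_iff_continuousAt]
  intro r0
  refine continuousAt_of_dominated (bound := fun η => (2 * (|r0| + 1) ^ 4 + 2 * (|r0| + 1) ^ 2) * (msW μ η / (1 + msN η))) ?_ ?_ (hE.const_mul _) ?_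
  · refine Eventually.of_forall fun r => ?_
    exact ((msWS_meas μ).comp (measurable_const.prodMk measurable_id)).aestronglyMeasurable
  · filter_upwards [Metric.ball_mem_nhds r0 one_pos] with r hr
    refine Eventually.of_forall fun η => (msWS_bound μ r η).trans ?_
    have h1 : |r| ≤ |r0| + 1 := by
      rw [Metric.mem_ball, Real.dist_eq] at hr
      have := abs_sub_abs_le_abs_sub r r0
      linarith
    have h2 : r ^ 2 ≤ (|r0| + 1) ^ 2 := by rw [← sq_abs r]; gcongr
    have h3 : r ^ 4 ≤ (|r0| + 1) ^ 4 := by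
      calc r ^ 4 = (r ^ 2) ^ 2 := by ring
        _ ≤ ((|r0| + 1) ^ 2) ^ 2 := by gcongr
        _ = _ := by ring
    have := msN_nonneg η
    have := msW_nonneg μ η
    gcongr
  · refine Eventually.of_forall fun η => ?_
    unfold msS
    fun_prop

theorem msWS_int (hE : Integrable fun η : Fin 5 → ℝ => msW μ η / (1 + msN η)) (z : ℝ) (hz : 0 < z) :
    Integrable (fun q : ℝ × (Fin 5 → ℝ) => Real.exp (-z * q.1 ^ 2) * (msW μ q.2 * msS (Real.sqrt (msN q.2)) q.1))
      (volume.prod volume) := by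
  have i1 : Integrable fun r : ℝ => Real.exp (-z * r ^ 2) * (2 * r ^ 4 + 2 * r ^ 2) := by
    have h4 := ms_int_poly_gauss z hz 4 (fun _ => 1) continuous_const (by simp)
    have h2 := ms_int_poly_gauss z hz 2 (fun _ => 1) continuous_const (by simp)
    refine ((h4.const_mul 2).add (h2.const_mul 2)).congr (Eventually.of_forall fun r => ?_)
    simp only [Pi.add_apply]; ring
  have i2 := i1.mul_prod hE
  refine i2.mono' ?_ (Eventually.of_forall fun q => ?_)
  · refine Measurable.aestronglyMeasurable (Measurable.mul (by fun_prop) (msWS_meas μ))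
  · rw [norm_mul, Real.norm_eq_abs, Real.abs_exp, mul_assoc]
    gcongr
    exact msWS_bound μ q.1 q.2

theorem msh_int (hE : Integrable fun η : Fin 5 → ℝ => msW μ η / (1 + msN η)) (z : ℝ) (hz : 0 < z) :
    Integrable fun r : ℝ => Real.exp (-z * r ^ 2) * msh μ r := by
  have := (msWS_int μ hE z hz).integral_prod_left
  refine this.congr (Eventually.of_forall fun r => ?_)
  simp only [msh]
  rw [integral_const_mul]

theorem msh_integral (hE : Integrable fun η : Fin 5 → ℝ => msW μ η / (1 + msN η)) (z : ℝ) (hz : 0 < z) :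
    ∫ r : ℝ, Real.exp (-z * r ^ 2) * msh μ r = 8 * Real.pi ^ 3 * msG μ z ^ 5 := by
  calc ∫ r : ℝ, Real.exp (-z * r ^ 2) * msh μ r
      = ∫ r : ℝ, ∫ η : Fin 5 → ℝ, Real.exp (-z * r ^ 2) * (msW μ η * msS (Real.sqrt (msN η)) r) := by
        congr 1; ext r; rw [msh, integral_const_mul]
    _ = ∫ η : Fin 5 → ℝ, ∫ r : ℝ, Real.exp (-z * r ^ 2) * (msW μ η * msS (Real.sqrt (msN η)) r) :=
        integral_integral_swap (msWS_int μ hE z hz)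
    _ = ∫ η : Fin 5 → ℝ, (Real.sqrt (Real.pi / z) / (4 * z ^ 2)) * (Real.exp (-(1 / (4 * z)) * msN η) * msW μ η) := by
        refine integral_congr_ae ?_
        have hne : ∀ᵐ η : Fin 5 → ℝ, η ≠ 0 := by
          rw [ae_iff]; simp
        filter_upwards [hne] with η hη
        have hN : 0 < msN η := by
          refine lt_of_le_of_ne (msN_nonneg η) fun h => hη ?_
          have := (Finset.sum_eq_zero_iff_of_nonneg (fun i _ => sq_nonneg (η i))).1 h.symm
          ext i
          simpa using this i (Finset.mem_univ i)
        have hs := ms_S_integral (Real.sqrt (msN η)) z (Real.sqrt_pos.2 hN).ne' hz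
        rw [Real.sq_sqrt hN.le] at hs
        have e : ∀ r : ℝ, Real.exp (-z * r ^ 2) * (msW μ η * msS (Real.sqrt (msN η)) r) =
          msW μ η * (Real.exp (-z * r ^ 2) * msS (Real.sqrt (msN η)) r) := fun r => by ring
        simp only [e]
        rw [integral_const_mul, hs, show -(1 / (4 * z)) * msN η = -msN η / (4 * z) by ring]
        ring
    _ = (Real.sqrt (Real.pi / z) / (4 * z ^ 2)) * (Real.sqrt (Real.pi / (1 / (4 * z))) * msG μ (1 / (4 * (1 / (4 * z))))) ^ 5 := by
        rw [integral_const_mul, msW_integral μ _ (by positivity)]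
    _ = _ := by
        rw [show 1 / (4 * (1 / (4 * z))) = z by field_simp, show Real.pi / (1 / (4 * z)) = 4 * Real.pi * z by field_simp]
        have e1 : Real.sqrt (4 * Real.pi * z) = Real.sqrt (Real.pi / z) * (2 * z) := by
          rw [show 4 * Real.pi * z = (Real.pi / z) * (2 * z) ^ 2 by field_simp; ring, Real.sqrt_mul (by positivity),
            Real.sqrt_sq (by positivity)]
        have e2 : Real.sqrt (Real.pi / z) ^ 2 = Real.pi / z := Real.sq_sqrt (by positivity)
        rw [e1]
        calc _ = (Real.sqrt (Real.pi / z) ^ 2) ^ 3 * (2 * z) ^ 5 / (4 * z ^ 2) * msG μ z ^ 5 := by ring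
          _ = _ := by rw [e2]; field_simp; ring
end

theorem ms_bdd_int {X : Type*} [MeasurableSpace X] {m : Measure X} (f g : X → ℝ) (hf : Measurable f)
    (hf01 : ∀ x, f x ∈ Icc (0:ℝ) 1) (hg : Integrable g m) (φ : ℝ → ℝ) (hφ : Continuous φ) :
    Integrable (fun x => φ (f x) * g x) m := by
  obtain ⟨B, hB⟩ := (isCompact_Icc (a := (0:ℝ)) (b := 1)).exists_bound_of_continuousOn hφ.continuousOn
  exact hg.bdd_mul (c := B) (hφ.measurable.comp hf).aestronglyMeasurable
    (Eventually.of_forall fun x => hB _ (hf01 x))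

theorem ms_approx {X : Type*} [MeasurableSpace X] {m : Measure X} (f g : X → ℝ) (hf : Measurable f)
    (hf01 : ∀ x, f x ∈ Icc (0:ℝ) 1) (hg : Integrable g m) (φ ψ : ℝ → ℝ) (hφ : Continuous φ)
    (hψ : Continuous ψ) (ε : ℝ) (hε : ∀ x ∈ Icc (0:ℝ) 1, |ψ x - φ x| ≤ ε) :
    |∫ x, ψ (f x) * g x ∂m - ∫ x, φ (f x) * g x ∂m| ≤ ε * ∫ x, |g x| ∂m := by
  rw [← integral_sub (ms_bdd_int f g hf hf01 hg ψ hψ) (ms_bdd_int f g hf hf01 hg φ hφ), ← integral_const_mul]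
  rw [← Real.norm_eq_abs]
  refine norm_integral_le_of_norm_le (hg.abs.const_mul ε) (Eventually.of_forall fun x => ?_)
  rw [← sub_mul, norm_mul]
  exact mul_le_mul_of_nonneg_right (hε _ (hf01 x)) (abs_nonneg _)

theorem ms_moment {X Y : Type*} [MeasurableSpace X] [MeasurableSpace Y] {m : Measure X} {n : Measure Y}
    (f g : X → ℝ) (f' g' : Y → ℝ) (hf : Measurable f) (hf' : Measurable f')
    (hf01 : ∀ x, f x ∈ Icc (0:ℝ) 1) (hf01' : ∀ x, f' x ∈ Icc (0:ℝ) 1)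
    (hg : Integrable g m) (hg' : Integrable g' n)
    (H : ∀ k : ℕ, ∫ x, f x ^ k * g x ∂m = ∫ y, f' y ^ k * g' y ∂n) (φ : ℝ → ℝ) (hφ : Continuous φ) :
    ∫ x, φ (f x) * g x ∂m = ∫ y, φ (f' y) * g' y ∂n := by
  have hp : ∀ p : Polynomial ℝ, ∫ x, p.eval (f x) * g x ∂m = ∫ y, p.eval (f' y) * g' y ∂n := by
    intro p
    induction p using Polynomial.induction_on' with
    | add p q hp hq =>
      simp only [Polynomial.eval_add, add_mul]
      rw [integral_add (ms_bdd_int f g hf hf01 hg _ p.continuous) (ms_bdd_int f g hf hf01 hg _ q.continuous),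
        integral_add (ms_bdd_int f' g' hf' hf01' hg' _ p.continuous) (ms_bdd_int f' g' hf' hf01' hg' _ q.continuous),
        hp, hq]
    | monomial k a =>
      simp only [Polynomial.eval_monomial, mul_assoc]
      rw [integral_const_mul, integral_const_mul, H]
  refine eq_of_forall_dist_le fun ε hε => ?_
  rw [Real.dist_eq]
  set K1 := ∫ x, |g x| ∂m
  set K2 := ∫ x, |g' x| ∂n
  have hK1 : 0 ≤ K1 := integral_nonneg fun _ => abs_nonneg _
  have hK2 : 0 ≤ K2 := integral_nonneg fun _ => abs_nonneg _
  obtain ⟨p, hpε⟩ := exists_polynomial_near_of_continuousOn 0 1 φ hφ.continuousOn (ε / (K1 + K2 + 1)) (by positivity)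
  have h1 := ms_approx f g hf hf01 hg φ (fun x => p.eval x) hφ p.continuous _ fun x hx => (hpε x hx).le
  have h2 := ms_approx f' g' hf' hf01' hg' φ (fun x => p.eval x) hφ p.continuous _ fun x hx => (hpε x hx).le
  rw [hp] at h1
  have h3 : ε / (K1 + K2 + 1) * K1 + ε / (K1 + K2 + 1) * K2 ≤ ε := by
    rw [← mul_add, div_mul_eq_mul_div, div_le_iff₀ (by positivity)]
    nlinarith
  rw [abs_le] at *
  constructor <;> linarith [h1.1, h1.2, h2.1, h2.2]

noncomputable def msQ (p : Fin 5 → ℝ × ℝ) : ℝ := ∑ i, ((p i).1 - (p i).2) ^ 2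

theorem msQ_nonneg (p : Fin 5 → ℝ × ℝ) : 0 ≤ msQ p := Finset.sum_nonneg fun i _ => sq_nonneg _

theorem msQ_cont : Continuous msQ := by unfold msQ; fun_prop

section
variable (μ : Measure ℝ) [IsFiniteMeasure μ]

theorem msQ_integral (z : ℝ) : ∫ p, Real.exp (-z * msQ p) ∂(Measure.pi fun _ : Fin 5 => μ.prod μ) = msG μ z ^ 5 := by
  have := integral_fintype_prod_eq_pow (ι := Fin 5) (fun p : ℝ × ℝ => Real.exp (-z * (p.1 - p.2) ^ 2)) (μ := μ.prod μ)
  rw [Fintype.card_fin] at this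
  rw [msG, ← this]
  congr 1; ext p
  rw [← Real.exp_sum, ← Finset.mul_sum]; rfl

theorem ms_exp_mem (t : ℝ) (ht : 0 ≤ t) : Real.exp (-t) ∈ Icc (0:ℝ) 1 :=
  ⟨(Real.exp_pos _).le, by rw [Real.exp_le_one_iff]; linarith⟩

theorem ms_duality (hE : Integrable fun η : Fin 5 → ℝ => msW μ η / (1 + msN η)) (φ : ℝ → ℝ) (hφ : Continuous φ) :
    ∫ r : ℝ, φ (Real.exp (-r ^ 2)) * (Real.exp (-r ^ 2) * msh μ r) =
      ∫ p, φ (Real.exp (-msQ p)) * (8 * Real.pi ^ 3 * Real.exp (-msQ p)) ∂(Measure.pi fun _ : Fin 5 => μ.prod μ) := by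
  have hQ := msQ_cont
  have hm : Measurable fun p => Real.exp (-msQ p) := hQ.neg.rexp.measurable
  refine ms_moment (fun r : ℝ => Real.exp (-r ^ 2)) _ (fun p => Real.exp (-msQ p)) _ (by fun_prop)
    hm (fun r => ms_exp_mem _ (sq_nonneg r)) (fun p => ms_exp_mem _ (msQ_nonneg p)) ?_ ?_ ?_ φ hφ
  · simpa using msh_int μ hE 1 one_pos
  · refine Integrable.const_mul ?_ _
    refine Integrable.of_bound hm.aestronglyMeasurable 1 (Eventually.of_forall fun p => ?_)
    rw [Real.norm_eq_abs, Real.abs_exp]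
    exact (ms_exp_mem _ (msQ_nonneg p)).2
  · intro k
    have e1 : ∀ t : ℝ, Real.exp (-t) ^ k * Real.exp (-t) = Real.exp (-(k + 1 : ℝ) * t) := by
      intro t
      rw [← Real.exp_nat_mul, ← Real.exp_add]; ring_nf
    have h1 := msh_integral μ hE (k + 1) (by positivity)
    have h2 := msQ_integral μ (k + 1)
    calc _ = ∫ r : ℝ, Real.exp (-(k + 1 : ℝ) * r ^ 2) * msh μ r := by
          congr 1; ext r; rw [← mul_assoc, e1]
      _ = 8 * Real.pi ^ 3 * ∫ p, Real.exp (-(k + 1 : ℝ) * msQ p) ∂(Measure.pi fun _ : Fin 5 => μ.prod μ) := by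
          rw [h1, h2]
      _ = _ := by
          rw [← integral_const_mul]
          congr 1; ext p; rw [← e1]; ring

theorem msh_even (r : ℝ) : msh μ (-r) = msh μ r := by
  unfold msh msS
  congr 1; ext η
  rw [mul_neg, Real.sin_neg, Real.cos_neg]; ring

theorem msh_zero : msh μ 0 = 0 := by
  simp [msh, msS]

theorem msh_abs (r : ℝ) : msh μ |r| = msh μ r := by
  rcases abs_choice r with h | h <;> rw [h]
  exact msh_even μ r

theorem ms_interior (A : Set ℝ) (hA : IsCompact A) (hμ0 : μ ≠ 0) (hμA : μ Aᶜ = 0)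
    (hE : Integrable fun η : Fin 5 → ℝ => msW μ η / (1 + msN η)) :
    (interior ((fun p => Real.sqrt (msQ p)) '' (Set.pi univ fun _ : Fin 5 => A ×ˢ A))).Nonempty := by
  set K : Set (Fin 5 → ℝ × ℝ) := Set.pi univ fun _ : Fin 5 => A ×ˢ A with hK
  have hKc : IsCompact K := isCompact_univ_pi fun _ => hA.prod hA
  set T := (fun p => Real.sqrt (msQ p)) '' K with hT
  have hTc : IsClosed T := (hKc.image (Real.continuous_sqrt.comp msQ_cont)).isClosed
  have hh := msh_cont μ hE
  have haeA : ∀ᵐ x ∂μ, x ∈ A := by rw [ae_iff]; exact hμA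
  have haeAA : ∀ᵐ q ∂(μ.prod μ), q ∈ A ×ˢ A := by
    filter_upwards [Measure.quasiMeasurePreserving_fst.ae haeA, Measure.quasiMeasurePreserving_snd.ae haeA] with q h1 h2
    exact ⟨h1, h2⟩
  have haeK : ∀ᵐ p ∂(Measure.pi fun _ : Fin 5 => μ.prod μ), p ∈ K := by
    have : ∀ᵐ p ∂(Measure.pi fun _ : Fin 5 => μ.prod μ), ∀ i, p i ∈ A ×ˢ A := by
      rw [ae_all_iff]
      intro i
      exact (Measure.quasiMeasurePreserving_eval (fun _ : Fin 5 => μ.prod μ) i).ae haeAA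
    filter_upwards [this] with p hp i _ using hp i
  haveI : NeZero μ := ⟨hμ0⟩
  have hG : 0 < msG μ 1 := by
    haveI : NeZero (μ.prod μ) := ⟨by
      intro h
      have h1 : (μ.prod μ) (univ ×ˢ univ) = 0 := by rw [h]; simp
      rw [Measure.prod_prod, mul_self_eq_zero, Measure.measure_univ_eq_zero] at h1
      exact hμ0 h1⟩
    exact integral_exp_pos (msG_int μ 1 zero_le_one)
  obtain ⟨r0, hr0⟩ : ∃ r, msh μ r ≠ 0 := by
    by_contra hcon
    push Not at hcon
    have h1 := msh_integral μ hE 1 one_pos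
    simp only [hcon, mul_zero, integral_zero] at h1
    have : 0 < 8 * Real.pi ^ 3 * msG μ 1 ^ 5 := by positivity
    linarith
  have hr0' : r0 ≠ 0 := by rintro rfl; exact hr0 (msh_zero μ)
  set c := msh μ r0 with hc
  have hU : IsOpen {r : ℝ | 0 < r ∧ 0 < c * msh μ r} :=
    (isOpen_lt continuous_const continuous_id).inter (isOpen_lt continuous_const (hh.const_mul c))
  refine ⟨|r0|, mem_interior.2 ⟨_, ?_, hU, ?_⟩⟩
  swap
  · refine ⟨abs_pos.2 hr0', ?_⟩
    rw [msh_abs, ← hc]; exact mul_self_pos.2 hr0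
  intro r hr
  by_contra hrT
  obtain ⟨δ0, hδ0, hball⟩ := Metric.isOpen_iff.1 (hU.inter hTc.isOpen_compl) r ⟨hr, hrT⟩
  set δ := min δ0 (r / 2) with hδ
  have hrpos : 0 < r := hr.1
  have hδpos : 0 < δ := lt_min hδ0 (by linarith)
  have hδr : δ ≤ r / 2 := min_le_right _ _
  have hδδ : δ ≤ δ0 := min_le_left _ _
  set v1 := Real.exp (-(r + δ) ^ 2) with hv1
  set v2 := Real.exp (-(r - δ) ^ 2) with hv2
  set φ : ℝ → ℝ := fun v => max 0 (min (v - v1) (v2 - v)) with hφd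
  have hφ : Continuous φ := by fun_prop
  have hφ0 : ∀ v, 0 ≤ φ v := fun v => le_max_left _ _
  have hφs : ∀ t, 0 ≤ t → 0 < φ (Real.exp (-t ^ 2)) → t ∈ {r : ℝ | 0 < r ∧ 0 < c * msh μ r} ∩ Tᶜ := by
    intro t ht hpos
    apply hball
    simp only [hφd, lt_max_iff, lt_irrefl, false_or, lt_min_iff, sub_pos, hv1, hv2, Real.exp_lt_exp] at hpos
    have h1 : t < r + δ := by by_contra! h; nlinarith [hpos.1]
    have h2 : r - δ < t := by by_contra! h; nlinarith [hpos.2]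
    rw [Metric.mem_ball, Real.dist_eq, abs_lt]
    constructor <;> linarith
  have hzero : ∫ p, φ (Real.exp (-msQ p)) * (8 * Real.pi ^ 3 * Real.exp (-msQ p)) ∂(Measure.pi fun _ : Fin 5 => μ.prod μ) = 0 := by
    refine integral_eq_zero_of_ae ?_
    filter_upwards [haeK] with p hp
    have : φ (Real.exp (-msQ p)) = 0 := by
      by_contra hne
      have hpos := lt_of_le_of_ne (hφ0 _) (Ne.symm hne)
      have h1 := hφs (Real.sqrt (msQ p)) (Real.sqrt_nonneg _) (by rwa [Real.sq_sqrt (msQ_nonneg p)])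
      exact h1.2 ⟨p, hp, rfl⟩
    simp [this]
  rw [← ms_duality μ hE φ hφ] at hzero
  set F : ℝ → ℝ := fun t => c * (φ (Real.exp (-t ^ 2)) * (Real.exp (-t ^ 2) * msh μ t)) with hF
  have hF0 : ∀ t, 0 ≤ F t := by
    intro t
    rcases (hφ0 (Real.exp (-t ^ 2))).eq_or_lt with h | h
    · simp [hF, ← h]
    · have h1 := hφs |t| (abs_nonneg t) (by rwa [sq_abs])
      have h2 : 0 < c * msh μ t := by have := h1.1.2; rwa [msh_abs] at this
      have : F t = φ (Real.exp (-t ^ 2)) * Real.exp (-t ^ 2) * (c * msh μ t) := by simp only [hF]; ring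
      rw [this]; positivity
  have hFi : Integrable F := by
    refine Integrable.const_mul ?_ _
    refine ms_bdd_int (fun t : ℝ => Real.exp (-t ^ 2)) _ (by fun_prop) (fun r => ms_exp_mem _ (sq_nonneg r)) ?_ φ hφ
    simpa using msh_int μ hE 1 one_pos
  have hFint : ∫ t, F t = 0 := by rw [hF, integral_const_mul, hzero, mul_zero]
  have hae := (integral_eq_zero_iff_of_nonneg hF0 hFi).1 hFint
  have hFc : Continuous F := by fun_prop
  have hF00 : F = 0 := (Continuous.ae_eq_iff_eq volume hFc continuous_zero).1 hae
  have hFr : F r = φ (Real.exp (-r ^ 2)) * Real.exp (-r ^ 2) * (c * msh μ r) := by simp only [hF]; ring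
  have hφr : 0 < φ (Real.exp (-r ^ 2)) := by
    simp only [hφd, lt_max_iff, lt_irrefl, false_or, lt_min_iff, sub_pos, hv1, hv2, Real.exp_lt_exp]
    constructor <;> nlinarith
  have hlast : 0 < F r := by
    rw [hFr]; have := hr.2; positivity
  rw [hF00] at hlast
  exact lt_irrefl _ hlast
end

theorem mattila_sjolin_product_dim_ge_five_eighths (d : ℕ) (hd : 5 ≤ d)
    (A : Set ℝ) (hA : IsCompact A) (hdim : (5 : ℝ≥0∞) / 8 ≤ dimH A) :
    (interior (distSet (prodSet A d))).Nonempty := by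
  have hlt : (((31 / 50 : NNReal) : NNReal) : ℝ≥0∞) < dimH A := by
    refine lt_of_lt_of_le ?_ hdim
    have : (5 : ℝ≥0∞) / 8 = ((5 / 8 : NNReal) : ℝ≥0∞) := by
      rw [ENNReal.coe_div (by norm_num)]; norm_num
    rw [this, ENNReal.coe_lt_coe, ← NNReal.coe_lt_coe]
    push_cast; norm_num
  have hH := hausdorffMeasure_of_lt_dimH hlt
  obtain ⟨μ, hfin, hμ0, hμA, C, hC0, hC⟩ := ms_frostman A hA (31 / 50) (by norm_num) (by
    have e : (((31 / 50 : NNReal) : NNReal) : ℝ) = 31 / 50 := by push_cast; rfl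
    rw [← e, hH]; simp)
  obtain ⟨K, hK0, hK⟩ := msG_bound μ C hC0 hC
  have hE := msW_energy μ K hK0 hK
  refine (ms_interior μ A hA hμ0 hμA hE).mono (interior_mono ?_)
  rintro _ ⟨p, hp, rfl⟩
  obtain ⟨k, rfl⟩ := Nat.exists_eq_add_of_le hd
  have hp' : ∀ i, (p i).1 ∈ A ∧ (p i).2 ∈ A := fun i => hp i (mem_univ i)
  refine ⟨WithLp.toLp 2 (Fin.append (fun i => (p i).1) (fun _ : Fin k => (p 0).1)), ?_,
    WithLp.toLp 2 (Fin.append (fun i => (p i).2) (fun _ : Fin k => (p 0).1)), ?_, ?_⟩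
  · intro i
    refine Fin.addCases (fun j => ?_) (fun j => ?_) i
    · simpa using (hp' j).1
    · simpa using (hp' 0).1
  · intro i
    refine Fin.addCases (fun j => ?_) (fun j => ?_) i
    · simpa using (hp' j).2
    · simpa using (hp' 0).1
  · rw [EuclideanSpace.dist_eq, Fin.sum_univ_add]
    simp [msQ, Real.dist_eq, sq_abs]
end
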